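/- Γ_n(t) = (Γ_{n+1}^{(0)} − Γ_{n−1}^{(0)})/(4t) + F + O(t), where F ∈ K is a polynomial in the parameters a_{n−N−1}, …, a_{n+N+1}, a_+, a_− (with coefficients involving only n, ε and u_1, …, u_N) in which both a_{n+N+1} and a_{n−N−1} actually occur and occur linearly, i.e., F has degree exactly 1 in a_{n−N−1} and degree exactly 1 in a_{n+N+1}, with nonzero coefficients. -/

import Mathlib

/-!
Common definitions: the matrices `L₁`, `L₂` of the Toeplitz lattice, their powers,
the recursion polynomials `Γ_k` (here `GamA`), `Γ̃_k` (here `GamB`) and their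
self-dual version (`GamSD`), together with the notion of formal Laurent
solutions of the (self-dual) Toeplitz lattice.
-/

noncomputable section

namespace SingConf

variable {A : Type*} [CommRing A]

/-- The entry `(L₁)_{ij} = -x_i y_{j-1} + δ_{i+1,j}` (for `j - i ≤ 1`, zero otherwise). -/
def L1e (x y : ℤ → A) (i j : ℤ) : A :=
  if j ≤ i + 1 then -(x i * y (j - 1)) + (if i + 1 = j then 1 else 0) else 0

/-- The entry `(L₂)_{ij} = -y_j x_{i-1} + δ_{j+1,i}` (for `j - i ≥ -1`, zero otherwise). -/
def L2e (x y : ℤ → A) (i j : ℤ) : A :=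
  if i ≤ j + 1 then -(y j * x (i - 1)) + (if j + 1 = i then 1 else 0) else 0

/-- The entry `(L₁^s)_{ij}`; the matrix `L₁` has upper bandwidth 1, so each entry of a
power is a finite sum. -/
def L1pow (x y : ℤ → A) : ℕ → ℤ → ℤ → A
  | 0 => fun i j => if i = j then 1 else 0
  | s + 1 => fun i j => ∑ l ∈ Finset.Icc (j - 1) (i + (s : ℤ)), L1pow x y s i l * L1e x y l j

/-- The entry `(L₂^s)_{ij}`. -/
def L2pow (x y : ℤ → A) : ℕ → ℤ → ℤ → A
  | 0 => fun i j => if i = j then 1 else 0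
  | s + 1 => fun i j => ∑ l ∈ Finset.Icc (i - (s : ℤ)) (j + 1), L2pow x y s i l * L2e x y l j

/-- The recursion polynomial
`Γ_k(x,y;u) = (v_k/y_k)(-(L₁P₁'(L₁))_{k+1,k+1} - (L₂P₂'(L₂))_{k,k}
              + (P₁'(L₁))_{k+1,k} + (P₂'(L₂))_{k,k+1}) + k x_k`
where `P₁(λ) = ∑_{i=1}^N u_i λ^i/i`, `P₂(λ) = ∑_{i=1}^N u_{-i} λ^i/i`, `v_k = 1 - x_k y_k`.
The apparent denominator `y_k` cancels, thanks to the identities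
`(L₁^{i-1})_{k+1,k} - (L₁^i)_{k+1,k+1} = y_k ∑_{l} x_l (L₁^{i-1})_{k+1,l}` and
`(L₂^{i-1})_{k,k+1} - (L₂^i)_{k,k} = y_k ∑_{l} x_{l-1} (L₂^{i-1})_{k,l}`,
which is how the cancellation-free expression below is obtained. -/
def GamA (N : ℕ) (u : ℤ → A) (x y : ℤ → A) (k : ℤ) : A :=
  (1 - x k * y k) *
    ((∑ i ∈ Finset.Icc 1 N, u (i : ℤ) *
        ∑ l ∈ Finset.Icc k (k + (i : ℤ)), x l * L1pow x y (i - 1) (k + 1) l) +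
      ∑ i ∈ Finset.Icc 1 N, u (-(i : ℤ)) *
        ∑ l ∈ Finset.Icc (k - (i : ℤ) + 1) (k + 1), x (l - 1) * L2pow x y (i - 1) k l) +
  (k : A) * x k

/-- The recursion polynomial
`Γ̃_k(x,y;u) = (v_k/x_k)(-(L₁P₁'(L₁))_{k,k} - (L₂P₂'(L₂))_{k+1,k+1}
              + (P₁'(L₁))_{k+1,k} + (P₂'(L₂))_{k,k+1}) + k y_k`,
written in cancellation-free form using
`(L₁^{i-1})_{k+1,k} - (L₁^i)_{k,k} = x_k ∑_{l} y_{l-1} (L₁^{i-1})_{l,k}` and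
`(L₂^{i-1})_{k,k+1} - (L₂^i)_{k+1,k+1} = x_k ∑_{l} y_l (L₂^{i-1})_{l,k+1}`. -/
def GamB (N : ℕ) (u : ℤ → A) (x y : ℤ → A) (k : ℤ) : A :=
  (1 - x k * y k) *
    ((∑ i ∈ Finset.Icc 1 N, u (i : ℤ) *
        ∑ l ∈ Finset.Icc (k - (i : ℤ) + 1) (k + 1), y (l - 1) * L1pow x y (i - 1) l k) +
      ∑ i ∈ Finset.Icc 1 N, u (-(i : ℤ)) *
        ∑ l ∈ Finset.Icc k (k + (i : ℤ)), y l * L2pow x y (i - 1) l (k + 1)) +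
  (k : A) * y k

/-- The self-dual recursion polynomial
`Γ_k(x;u) = (v_k/x_k)(2(P'(L))_{k+1,k} - (LP'(L))_{k+1,k+1} - (LP'(L))_{k,k}) + k x_k`
(where `L = L₁` with `y = x`, `v_k = 1 - x_k²`), in cancellation-free form. -/
def GamSD (N : ℕ) (u : ℕ → A) (x : ℤ → A) (k : ℤ) : A :=
  (1 - x k * x k) *
    (∑ i ∈ Finset.Icc 1 N, u i *
      ((∑ l ∈ Finset.Icc k (k + (i : ℤ)), x l * L1pow x x (i - 1) (k + 1) l) +
        ∑ l ∈ Finset.Icc (k - (i : ℤ) + 1) (k + 1), x (l - 1) * L1pow x x (i - 1) l k)) +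
  (k : A) * x k

variable {K : Type*} [Field K]

/-- `f(t) = O(t^m)` for a formal Laurent series. -/
def BigO (f : LaurentSeries K) (m : ℤ) : Prop := ∀ i < m, f.coeff i = 0

/-- A family `x(t) = (x_k(t))_{k ∈ ℤ}` of formal Laurent series is a solution of the first
vector field of the self-dual Toeplitz lattice: `dx_k/dt = (1 - x_k²)(x_{k+1} - x_{k-1})`;
stated coefficientwise (the coefficient of `t^m` in `dx_k/dt` is `(m+1)·x_k^{(m+1)}`). -/
def IsSolSD (x : ℤ → LaurentSeries K) : Prop :=
  ∀ k m : ℤ, ((m + 1 : ℤ) : K) * (x k).coeff (m + 1) =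
    ((1 - x k * x k) * (x (k + 1) - x (k - 1))).coeff m

/-- A family `(x_k(t), y_k(t))_{k ∈ ℤ}` of formal Laurent series is a solution of the first
Toeplitz vector field: `dx_k/dt = (1 - x_k y_k)(x_{k+1} - x_{k-1})`,
`dy_k/dt = (1 - x_k y_k)(y_{k+1} - y_{k-1})`. -/
def IsSolT (x y : ℤ → LaurentSeries K) : Prop :=
  ∀ k m : ℤ,
    ((m + 1 : ℤ) : K) * (x k).coeff (m + 1) =
      ((1 - x k * y k) * (x (k + 1) - x (k - 1))).coeff m ∧
    ((m + 1 : ℤ) : K) * (y k).coeff (m + 1) =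
      ((1 - x k * y k) * (y (k + 1) - y (k - 1))).coeff m

end SingConf

namespace SingConf

/-- Indices `k` with `|k - n| ≥ 2`. -/
abbrev OffSD (n : ℤ) := {k : ℤ // k ≤ n - 2 ∨ n + 2 ≤ k}

/-- Indeterminates: the `a_k` (`|k - n| ≥ 2`), `a₊, a₋` (a `Bool`), and `u_1, …, u_N`. -/
abbrev IdxSD (n : ℤ) (N : ℕ) := OffSD n ⊕ (Bool ⊕ {i : ℕ // 1 ≤ i ∧ i ≤ N})

/-- The field of rational functions over `ℚ` in the indeterminates
`a_k (|k - n| ≥ 2), a₊, a₋, u_1, …, u_N`. -/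
abbrev KSD (n : ℤ) (N : ℕ) := FractionRing (MvPolynomial (IdxSD n N) ℚ)

/-- The indeterminate `a₊`. -/
def apSD (n : ℤ) (N : ℕ) : KSD n N :=
  algebraMap (MvPolynomial (IdxSD n N) ℚ) _ (MvPolynomial.X (Sum.inr (Sum.inl true)))

/-- The indeterminate `a₋`. -/
def amSD (n : ℤ) (N : ℕ) : KSD n N :=
  algebraMap (MvPolynomial (IdxSD n N) ℚ) _ (MvPolynomial.X (Sum.inr (Sum.inl false)))

/-- The parameters `a_k`, with the conventions `a_{n-1} = 1`, `a_{n+1} = -1`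
(and the junk value `a_n = 0`; `a_n` does not exist). -/
def avSD (n : ℤ) (N : ℕ) : ℤ → KSD n N := fun k =>
  if k = n + 1 then -1
  else if k = n - 1 then 1
  else if h : k ≤ n - 2 ∨ n + 2 ≤ k then
    algebraMap (MvPolynomial (IdxSD n N) ℚ) _ (MvPolynomial.X (Sum.inl ⟨k, h⟩))
  else 0

/-- The indeterminates `u_1, …, u_N` (with junk value `0` out of range). -/
def uvSD (n : ℤ) (N : ℕ) : ℕ → KSD n N := fun i =>
  if h : 1 ≤ i ∧ i ≤ N then
    algebraMap (MvPolynomial (IdxSD n N) ℚ) _ (MvPolynomial.X (Sum.inr (Sum.inr ⟨i, h⟩)))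
  else 0

/-- The time-dependent parameters `u(t) = (u_1 + t, u_2, …, u_N)`. -/
def utSD (n : ℤ) (N : ℕ) : ℕ → LaurentSeries (KSD n N) := fun i =>
  HahnSeries.C (uvSD n N i) + (if i = 1 then HahnSeries.single (1 : ℤ) 1 else 0)

/-- `x(t)` is *the* formal Laurent solution over `KSD n N` of the self-dual Toeplitz lattice
such that only `x_n(t)` has a pole and `x_n(t) = -ε/(2t) + O(1)`,
`x_{n±1}(t) = ∓ε + 4a_± t + O(t²)`, `x_k(t) = ε a_k + O(t)` for `|k - n| ≥ 2`. -/
def IsTheSDSol (n : ℤ) (N : ℕ) (ε : KSD n N) (x : ℤ → LaurentSeries (KSD n N)) : Prop :=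
  IsSolSD x ∧ (∀ k, k ≠ n → BigO (x k) 0) ∧ BigO (x n) (-1) ∧
  (x n).coeff (-1) = -ε / 2 ∧
  (x (n + 1)).coeff 0 = -ε ∧ (x (n - 1)).coeff 0 = ε ∧
  (x (n + 1)).coeff 1 = 4 * ε * apSD n N ∧ (x (n - 1)).coeff 1 = 4 * ε * amSD n N ∧
  (∀ k, 2 ≤ |k - n| → (x k).coeff 0 = ε * avSD n N k)

end SingConf

open SingConf MvPolynomial

/-!
The proof rests on the transport equation `d/dt Γ_k = (1 - x_k²)(Γ_{k+1} - Γ_{k-1})`, which the Lax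
equation yields once the first parameter moves as `u_1 + t`. Since `Γ_k` involves only
`x_{k-N}, …, x_{k+N}`, it is regular for `k < n - N`; the transport equation carries regularity up
to `k = n - 1`, and then a pole of order at most one to `k = n`. The symmetry
`x_k ↦ (-1)^k x_{-k}` gives regularity for `k > n`. The lowest order term of the transport equation
at `k = n` is then the formula for the residue.

For the constant term, differentiate coefficientwise with respect to a parameter `a_M`. The
variation `∂x_k/∂a_M` satisfies the linearised equations, so its order of vanishing grows as `k`
moves away from `M`, across the pole. For `|M - n| > N + 1` the variation
of `Γ_n` therefore vanishes to positive order, while for `M = n ± (N + 1)` its leading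
coefficient can be followed explicitly: up to sign it is `2 ε u_N a_±` times a product of
factors `1 - a_l²`, which involves neither of `a_{n±(N+1)}`.
-/

namespace SingConf

/-! ### The Lax equation and the recursion polynomials -/

section Lax

variable {A : Type*} [CommRing A]

lemma L1e_eq_zero_of_lt (x y : ℤ → A) {i j : ℤ} (h : i + 1 < j) : L1e x y i j = 0 :=
  if_neg (not_le.mpr h)

lemma L1pow_eq_zero_of_lt (x y : ℤ → A) {s : ℕ} {i j : ℤ} (h : i + s < j) :
    L1pow x y s i j = 0 := by
  cases s with
  | zero => exact if_neg (by push_cast at h; omega)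
  | succ s =>
    simp only [L1pow]
    rw [Finset.Icc_eq_empty (by push_cast at h; omega), Finset.sum_empty]

lemma L1pow_succ_eq_sum_right (x y : ℤ → A) {s : ℕ} {i j p q : ℤ} (hp : p ≤ j - 1)
    (hq : i + s ≤ q) :
    L1pow x y (s + 1) i j = ∑ l ∈ Finset.Icc p q, L1pow x y s i l * L1e x y l j := by
  refine Finset.sum_subset (Finset.Icc_subset_Icc hp hq) fun l _ hl => ?_
  rcases lt_or_ge l (j - 1) with h | h
  · rw [L1e_eq_zero_of_lt x y (by omega), mul_zero]
  · rw [L1pow_eq_zero_of_lt x y (by simp only [Finset.mem_Icc] at hl; omega), zero_mul]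

lemma L1pow_succ_eq_sum_left (x y : ℤ → A) {s : ℕ} {i j p q : ℤ} (hp : p ≤ j - s)
    (hq : i + 1 ≤ q) :
    L1pow x y (s + 1) i j = ∑ l ∈ Finset.Icc p q, L1e x y i l * L1pow x y s l j := by
  induction s generalizing j with
  | zero =>
    rw [L1pow_succ_eq_sum_right x y (min_le_right i (j - 1)) (q := i) (by simp)]
    simp only [L1pow, ite_mul, mul_ite, one_mul, mul_one, zero_mul, mul_zero, Finset.sum_ite_eq,
      Finset.sum_ite_eq']
    rw [if_pos (by simp)]
    split_ifs with h
    · rfl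
    · exact L1e_eq_zero_of_lt x y (by simp only [Finset.mem_Icc] at h; push_cast at hp; omega)
  | succ s ih =>
    push_cast at hp
    calc L1pow x y (s + 1 + 1) i j
        = ∑ l ∈ Finset.Icc (j - 1) (q + s),
            ∑ m ∈ Finset.Icc p q, L1e x y i m * (L1pow x y s m l * L1e x y l j) := by
          rw [L1pow_succ_eq_sum_right x y le_rfl (by push_cast; omega : i + (s + 1 : ℕ) ≤ q + s)]
          refine Finset.sum_congr rfl fun l hl => ?_
          rw [ih (by simp only [Finset.mem_Icc] at hl; omega), Finset.sum_mul]
          simp only [mul_assoc]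
      _ = ∑ m ∈ Finset.Icc p q, L1e x y i m * L1pow x y (s + 1) m j := by
          rw [Finset.sum_comm]
          refine Finset.sum_congr rfl fun m hm => ?_
          rw [L1pow_succ_eq_sum_right x y le_rfl
            (by simp only [Finset.mem_Icc] at hm; omega : m + s ≤ q + s), Finset.mul_sum]

/-- The tail `∑_{l ≥ j - 1} x_l (L^s)_{il}` of the `i`-th row of `L^s` paired with `x`. -/
def rowSum (x : ℤ → A) (s : ℕ) (i j : ℤ) : A :=
  ∑ l ∈ Finset.Icc (j - 1) (i + s), x l * L1pow x x s i l

/-- The initial part `∑_{l ≤ i + 1} x_{l-1} (L^s)_{lj}` of the `j`-th column of `L^s` paired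
with the shift of `x`. -/
def colSum (x : ℤ → A) (s : ℕ) (i j : ℤ) : A :=
  ∑ l ∈ Finset.Icc (j - s) (i + 1), x (l - 1) * L1pow x x s l j

lemma rowSum_eq_zero_of_lt (x : ℤ → A) {s : ℕ} {i j : ℤ} (h : i + s < j - 1) :
    rowSum x s i j = 0 := by
  rw [rowSum, Finset.Icc_eq_empty (by omega), Finset.sum_empty]

lemma colSum_eq_zero_of_lt (x : ℤ → A) {s : ℕ} {i j : ℤ} (h : i + 1 < j - s) :
    colSum x s i j = 0 := by
  rw [colSum, Finset.Icc_eq_empty (by omega), Finset.sum_empty]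

lemma rowSum_eq_add (x : ℤ → A) (s : ℕ) (i j : ℤ) :
    rowSum x s i j = rowSum x s i (j + 1) + x (j - 1) * L1pow x x s i (j - 1) := by
  rcases le_or_gt (j - 1) (i + s) with h | h
  · rw [rowSum, ← Finset.insert_Icc_add_one_left_eq_Icc h, Finset.sum_insert (by simp),
      add_comm, rowSum, show j + 1 - 1 = j - 1 + 1 by ring]
  · rw [rowSum_eq_zero_of_lt x h, rowSum_eq_zero_of_lt x (by omega),
      L1pow_eq_zero_of_lt x x h, mul_zero, add_zero]

lemma colSum_eq_add (x : ℤ → A) (s : ℕ) (i j : ℤ) :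
    colSum x s i j = colSum x s (i - 1) j + x i * L1pow x x s (i + 1) j := by
  rcases le_or_gt (j - s) (i + 1) with h | h
  · rw [colSum, ← Finset.insert_Icc_sub_one_right_eq_Icc h, Finset.sum_insert (by simp),
      add_comm, colSum, show i - 1 + 1 = i + 1 - 1 by ring, add_sub_cancel_right]
  · rw [colSum_eq_zero_of_lt x h, colSum_eq_zero_of_lt x (by omega),
      L1pow_eq_zero_of_lt x x (by omega), mul_zero, add_zero]

lemma L1e_eq_sub_ite (x y : ℤ → A) {i j : ℤ} (h : j ≤ i + 1) :
    L1e x y i j = (if i + 1 = j then 1 else 0) - x i * y (j - 1) := by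
  rw [L1e, if_pos h, neg_add_eq_sub]

lemma L1pow_succ_eq_sub_rowSum (x : ℤ → A) (s : ℕ) (i j : ℤ) :
    L1pow x x (s + 1) i j = L1pow x x s i (j - 1) - x (j - 1) * rowSum x s i j := by
  have entry : ∀ l ∈ Finset.Icc (j - 1) (i + s), L1pow x x s i l * L1e x x l j =
      (if l = j - 1 then L1pow x x s i l else 0) - x (j - 1) * (x l * L1pow x x s i l) := by
    intro l hl
    rw [L1e_eq_sub_ite x x (by simp only [Finset.mem_Icc] at hl; omega)]
    simp only [← eq_sub_iff_add_eq, mul_sub, mul_ite, mul_one, mul_zero]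
    ring
  rw [L1pow_succ_eq_sum_right x x le_rfl le_rfl, Finset.sum_congr rfl entry,
    Finset.sum_sub_distrib, Finset.sum_ite_eq', ← Finset.mul_sum, ← rowSum]
  split_ifs with h
  · rfl
  · rw [L1pow_eq_zero_of_lt x x (by simp only [Finset.mem_Icc] at h; omega)]

lemma L1pow_succ_eq_sub_colSum (x : ℤ → A) (s : ℕ) (i j : ℤ) :
    L1pow x x (s + 1) i j = L1pow x x s (i + 1) j - x i * colSum x s i j := by
  have entry : ∀ l ∈ Finset.Icc (j - s) (i + 1), L1e x x i l * L1pow x x s l j =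
      (if i + 1 = l then L1pow x x s l j else 0) - x i * (x (l - 1) * L1pow x x s l j) := by
    intro l hl
    rw [L1e_eq_sub_ite x x (by simp only [Finset.mem_Icc] at hl; omega), sub_mul, ite_mul, one_mul,
      zero_mul, mul_assoc]
  rw [L1pow_succ_eq_sum_left x x le_rfl le_rfl, Finset.sum_congr rfl entry,
    Finset.sum_sub_distrib, Finset.sum_ite_eq, ← Finset.mul_sum, ← colSum]
  split_ifs with h
  · rfl
  · rw [L1pow_eq_zero_of_lt x x (by simp only [Finset.mem_Icc] at h; omega)]

/-- `g` is transported along `x` by the (rescaled) first Toeplitz vector field: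
`D g_k = τ (1 - x_k²)(g_{k+1} - g_{k-1})`. The self-dual Toeplitz lattice itself says that `x` is
transported along `x`, with `D = τ d/dt`. -/
def IsTransported (D : Derivation ℤ A A) (τ : A) (x g : ℤ → A) : Prop :=
  ∀ k, D (g k) = τ * ((1 - x k * x k) * (g (k + 1) - g (k - 1)))

/-- The entries of the commutator of a matrix `S` with the tridiagonal matrix of the Lax
equation. -/
def laxCommutator (x : ℤ → A) (S : ℤ → ℤ → A) (i j : ℤ) : A :=
  x i * x (i - 1) * S i j + (1 - x i * x i) * S (i + 1) j - S (i - 1) j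
    - S i j * (x j * x (j - 1)) - S i (j - 1) * (1 - x (j - 1) * x (j - 1)) + S i (j + 1)

lemma laxCommutator_L1pow_zero (x : ℤ → A) (i j : ℤ) :
    laxCommutator x (L1pow x x 0) i j = 0 := by
  simp only [laxCommutator, L1pow]
  obtain rfl | h₀ := eq_or_ne j i
  · simp [show j ≠ j - 1 by omega]
  obtain rfl | h₁ := eq_or_ne j (i + 1)
  · simp [show i - 1 ≠ i + 1 by omega, show i ≠ i + 1 + 1 by omega]
  obtain rfl | h₂ := eq_or_ne j (i - 1)
  · simp [show i + 1 ≠ i - 1 by omega, show i ≠ i - 1 by omega,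
      show i ≠ i - 1 - 1 by omega]
  rw [if_neg h₀.symm, if_neg h₁.symm, if_neg h₂.symm, if_neg (by omega), if_neg (by omega)]
  ring

variable {D : Derivation ℤ A A} {τ : A} {x : ℤ → A}

lemma forall_of_ge_of_step_down {P : ℤ → Prop} {m : ℤ} (hge : ∀ j, m ≤ j → P j)
    (step : ∀ j, P (j + 1) → P j) (j : ℤ) : P j := by
  rcases le_total m j with h | h
  · exact hge j h
  · induction j, h using Int.leInductionDown with
    | base => exact hge m le_rfl
    | pred j _ ih => exact step _ (by rwa [sub_add_cancel])

lemma forall_of_le_of_step_up {P : ℤ → Prop} {m : ℤ} (hle : ∀ j, j ≤ m → P j)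
    (step : ∀ j, P (j - 1) → P j) (j : ℤ) : P j := by
  rcases le_total j m with h | h
  · exact hle j h
  · induction j, h using Int.leInduction with
    | base => exact hle m le_rfl
    | succ j _ ih => exact step _ (by rwa [add_sub_cancel_right])

-- Both sides vanish for large `j` and have the same increments in `j`.
lemma derivation_rowSum (hx : IsTransported D τ x x) {s : ℕ}
    (hL : ∀ i j, D (L1pow x x s i j) = τ * laxCommutator x (L1pow x x s) i j) (i j : ℤ) :
    D (rowSum x s i j) = τ * (x i * x (i - 1) * rowSum x s i j +
      (1 - x i * x i) * rowSum x s (i + 1) j - rowSum x s (i - 1) j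
      - (1 - x (j - 2) * x (j - 2)) * x (j - 1) * L1pow x x s i (j - 2)
      - x (j - 2) * L1pow x x s i (j - 1)) := by
  induction j using forall_of_ge_of_step_down (m := i + s + 3) with
  | hge j hj =>
    simp [rowSum_eq_zero_of_lt x (show i + s < j - 1 by omega),
      rowSum_eq_zero_of_lt x (show i + 1 + s < j - 1 by omega),
      rowSum_eq_zero_of_lt x (show i - 1 + s < j - 1 by omega),
      L1pow_eq_zero_of_lt x x (show i + s < j - 2 by omega),
      L1pow_eq_zero_of_lt x x (show i + s < j - 1 by omega)]
  | step j ih =>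
    rw [rowSum_eq_add x s i j, rowSum_eq_add x s (i + 1) j, rowSum_eq_add x s (i - 1) j, map_add,
      D.leibniz, ih, hL, hx]
    simp only [laxCommutator, smul_eq_mul, show j + 1 - 2 = j - 1 by ring, add_sub_cancel_right,
      show j - 1 - 1 = j - 2 by ring, sub_add_cancel]
    ring

-- Both sides vanish for very negative `i` and have the same increments in `i`.
lemma derivation_colSum (hx : IsTransported D τ x x) {s : ℕ}
    (hL : ∀ i j, D (L1pow x x s i j) = τ * laxCommutator x (L1pow x x s) i j) (i j : ℤ) :
    D (colSum x s i j) = τ * (-(x j * x (j - 1)) * colSum x s i j -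
      (1 - x (j - 1) * x (j - 1)) * colSum x s i (j - 1) + colSum x s i (j + 1)
      + x i * (1 - x (i + 1) * x (i + 1)) * L1pow x x s (i + 2) j
      + x (i + 1) * L1pow x x s (i + 1) j) := by
  induction i using forall_of_le_of_step_up (m := j - s - 3) with
  | hle i hi =>
    simp [colSum_eq_zero_of_lt x (show i + 1 < j - s by omega),
      colSum_eq_zero_of_lt x (show i + 1 < j - 1 - s by omega),
      colSum_eq_zero_of_lt x (show i + 1 < j + 1 - s by omega),
      L1pow_eq_zero_of_lt x x (show i + 2 + s < j by omega),
      L1pow_eq_zero_of_lt x x (show i + 1 + s < j by omega)]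
  | step i ih =>
    rw [colSum_eq_add x s i j, colSum_eq_add x s i (j - 1), colSum_eq_add x s i (j + 1), map_add,
      D.leibniz, ih, hL, hx]
    simp only [laxCommutator, smul_eq_mul, show i - 1 + 2 = i + 1 by ring, add_sub_cancel_right,
      show i + 1 + 1 = i + 2 by ring, sub_add_cancel]
    ring

lemma derivation_L1pow (hx : IsTransported D τ x x) (s : ℕ) (i j : ℤ) :
    D (L1pow x x s i j) = τ * laxCommutator x (L1pow x x s) i j := by
  induction s generalizing i j with
  | zero =>
    rw [laxCommutator_L1pow_zero, mul_zero]
    simp only [L1pow]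
    split_ifs <;> simp
  | succ s ih =>
    have row₀ := rowSum_eq_add x s i (j - 1)
    have row₁ := rowSum_eq_add x s i j
    rw [L1pow_succ_eq_sub_rowSum, map_sub, D.leibniz, ih, hx, derivation_rowSum hx ih]
    simp only [laxCommutator, smul_eq_mul, L1pow_succ_eq_sub_rowSum, add_sub_cancel_right,
      sub_add_cancel, show j - 1 - 1 = j - 2 by ring] at row₀ ⊢
    linear_combination -(τ * x (j - 2) * (1 - x (j - 1) * x (j - 1))) * row₀ - τ * x j * row₁

/-- The contribution `(v_k/x_k)(2 (L^s)_{k+1,k} - (L^{s+1})_{k+1,k+1} - (L^{s+1})_{k,k})` of the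
monomial `P'(λ) = λ^s` to `Γ_k`, free of denominators. -/
def gammaTerm (x : ℤ → A) (s : ℕ) (k : ℤ) : A :=
  (1 - x k * x k) * (rowSum x s (k + 1) (k + 1) + colSum x s k k)

lemma isTransported_gammaTerm (hx : IsTransported D τ x x) (s : ℕ) :
    IsTransported D τ x (gammaTerm x s) := by
  intro k
  have hL := derivation_L1pow hx s
  have row₀ := rowSum_eq_add x s k k
  have row₁ := rowSum_eq_add x s (k + 1) k
  have row₂ := rowSum_eq_add x s (k + 2) (k + 1)
  have col₁ := colSum_eq_add x s (k + 1) k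
  have col₂ := colSum_eq_add x s (k + 1) (k + 1)
  have col₀ := colSum_eq_add x s k (k - 1)
  have pow₁ := L1pow_succ_eq_sub_rowSum x s (k + 1) (k + 1)
  have pow₁' := L1pow_succ_eq_sub_colSum x s (k + 1) (k + 1)
  have pow₀ := L1pow_succ_eq_sub_rowSum x s k k
  have pow₀' := L1pow_succ_eq_sub_colSum x s k k
  have pow₂ := L1pow_succ_eq_sub_rowSum x s (k + 1) k
  have pow₂' := L1pow_succ_eq_sub_colSum x s (k + 1) k
  simp only [gammaTerm]
  rw [D.leibniz, map_add, derivation_rowSum hx hL, derivation_colSum hx hL, map_sub, D.leibniz,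
    hx, D.map_one_eq_zero]
  simp only [smul_eq_mul, show k + 1 + 1 = k + 2 by ring, add_sub_cancel_right, sub_add_cancel,
    show k + 1 - 2 = k - 1 by ring] at *
  linear_combination τ * (1 - x k * x k) * (-x (k + 1) * pow₁ + x (k + 1) * pow₁'
    + x (k - 1) * pow₀' - x (k - 1) * pow₀ + 2 * x k * (pow₂ - pow₂')
    + (1 - x (k + 1) * x (k + 1)) * row₂ + row₀ - 2 * x k * x (k - 1) * row₁
    - (1 - x (k - 1) * x (k - 1)) * col₀ - col₂ + 2 * x k * x (k + 1) * col₁)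

lemma GamSD_eq_sum_gammaTerm (N : ℕ) (u : ℕ → A) (x : ℤ → A) (k : ℤ) :
    GamSD N u x k = (∑ s ∈ Finset.range N, u (s + 1) * gammaTerm x s k) + (k : A) * x k := by
  rw [GamSD, Finset.mul_sum, ← Finset.Ico_add_one_right_eq_Icc, Finset.sum_Ico_eq_sum_range,
    Nat.add_sub_cancel]
  congr 1
  refine Finset.sum_congr rfl fun s _ => ?_
  rw [gammaTerm, rowSum, colSum, add_comm 1 s, Nat.add_sub_cancel, add_sub_cancel_right]
  push_cast
  rw [show k + ((s : ℤ) + 1) = k + 1 + s by ring, show k - ((s : ℤ) + 1) + 1 = k - s by ring]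
  ring

lemma gammaTerm_zero (x : ℤ → A) (k : ℤ) :
    gammaTerm x 0 k = (1 - x k * x k) * (x (k + 1) + x (k - 1)) := by
  simp [gammaTerm, rowSum, colSum, L1pow]

theorem isTransported_GamSD (hx : IsTransported D τ x x) {N : ℕ} (hN : 1 ≤ N) {u : ℕ → A}
    (hu : ∀ i, D (u i) = if i = 1 then τ else 0) : IsTransported D τ x (GamSD N u x) := by
  intro k
  have term : ∀ s ∈ Finset.range N, D (u (s + 1) * gammaTerm x s k) =
      (if s = 0 then τ * gammaTerm x s k else 0) + τ * ((1 - x k * x k) *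
        (u (s + 1) * gammaTerm x s (k + 1) - u (s + 1) * gammaTerm x s (k - 1))) := by
    intro s _
    rw [D.leibniz, isTransported_gammaTerm hx s k, hu]
    simp only [smul_eq_mul, Nat.add_eq_right]
    split_ifs <;> ring
  have diagonal : D ((k : A) * x k) = k * D (x k) := by
    rw [D.leibniz, Derivation.map_intCast, smul_zero, add_zero, smul_eq_mul]
  simp only [GamSD_eq_sum_gammaTerm]
  rw [map_add, map_sum, Finset.sum_congr rfl term, Finset.sum_add_distrib, Finset.sum_ite_eq',
    if_pos (Finset.mem_range.mpr hN), gammaTerm_zero, diagonal, hx, ← Finset.mul_sum,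
    ← Finset.mul_sum, Finset.sum_sub_distrib]
  push_cast
  ring

lemma IsTransported.linearised {g : ℤ → A} (h : IsTransported D τ x g) {δ : Derivation ℤ A A}
    (hcomm : ∀ a, D (δ a) = δ (D a)) (hτ : δ τ = 0) (k : ℤ) :
    D (δ (g k)) = τ * ((1 - x k * x k) * (δ (g (k + 1)) - δ (g (k - 1))) -
      2 * x k * δ (x k) * (g (k + 1) - g (k - 1))) := by
  rw [hcomm, h k]
  simp only [Derivation.leibniz, map_sub, Derivation.map_one_eq_zero, smul_eq_mul, hτ]
  ring

end Lax

section Locality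

variable {A : Type*} [CommRing A] {S : Subring A} {x : ℤ → A}

lemma one_sub_mul_self_mem {a : A} (ha : a ∈ S) : 1 - a * a ∈ S :=
  S.sub_mem S.one_mem (S.mul_mem ha ha)

lemma L1e_mem {i j : ℤ} (h : ∀ l, j - 1 ≤ l → l ≤ i → x l ∈ S) : L1e x x i j ∈ S := by
  rcases le_or_gt j (i + 1) with hj | hj
  · rw [L1e_eq_sub_ite x x hj]
    refine S.sub_mem ?_ (S.mul_mem (h i (by omega) le_rfl) (h _ le_rfl (by omega)))
    split_ifs
    exacts [S.one_mem, S.zero_mem]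
  · exact L1e_eq_zero_of_lt x x hj ▸ S.zero_mem

lemma L1pow_mem {s : ℕ} {i j : ℤ} (h : ∀ l, j - s ≤ l → l < i + s → x l ∈ S) :
    L1pow x x s i j ∈ S := by
  induction s generalizing j with
  | zero =>
    simp only [L1pow]
    split_ifs
    exacts [S.one_mem, S.zero_mem]
  | succ s ih =>
    push_cast at h
    refine S.sum_mem fun l hl => ?_
    simp only [Finset.mem_Icc] at hl
    exact S.mul_mem (ih fun m _ _ => h m (by omega) (by omega))
      (L1e_mem fun m _ _ => h m (by omega) (by omega))

/-- The product `∏_{i<m} (1 - x_{k+i}²)`. -/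
def vProd (x : ℤ → A) (k : ℤ) (m : ℕ) : A :=
  ∏ i ∈ Finset.range m, (1 - x (k + i) * x (k + i))

lemma vProd_zero (x : ℤ → A) (k : ℤ) : vProd x k 0 = 1 := Finset.prod_range_zero _

lemma vProd_succ (x : ℤ → A) (k : ℤ) (m : ℕ) :
    vProd x k (m + 1) = vProd x k m * (1 - x (k + m) * x (k + m)) := Finset.prod_range_succ _ _

lemma vProd_succ' (x : ℤ → A) (k : ℤ) (m : ℕ) :
    vProd x k (m + 1) = (1 - x k * x k) * vProd x (k + 1) m := by
  simp only [vProd, Finset.prod_range_succ', Nat.cast_zero, add_zero, Nat.cast_add, Nat.cast_one]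
  rw [mul_comm]
  simp only [add_assoc, add_comm (1 : ℤ)]

lemma L1pow_add_self (x : ℤ → A) (s : ℕ) (i : ℤ) : L1pow x x s i (i + s) = vProd x i s := by
  induction s with
  | zero => simp [L1pow, vProd_zero]
  | succ s ih =>
    rw [L1pow_succ_eq_sub_rowSum, vProd_succ, ← ih, rowSum]
    push_cast
    rw [show i + ((s : ℤ) + 1) - 1 = i + s by ring, Finset.Icc_self, Finset.sum_singleton]
    ring

lemma rowSum_mem {s : ℕ} {i j : ℤ} (h : ∀ l, j - 1 - s ≤ l → l ≤ i + s → x l ∈ S) :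
    rowSum x s i j ∈ S := by
  refine S.sum_mem fun l hl => ?_
  simp only [Finset.mem_Icc] at hl
  exact S.mul_mem (h l (by omega) (by omega)) (L1pow_mem fun m _ _ => h m (by omega) (by omega))

lemma colSum_mem {s : ℕ} {i j : ℤ} (h : ∀ l, j - s - 1 ≤ l → l ≤ i + s → x l ∈ S) :
    colSum x s i j ∈ S := by
  refine S.sum_mem fun l hl => ?_
  simp only [Finset.mem_Icc] at hl
  exact S.mul_mem (h _ (by omega) (by omega)) (L1pow_mem fun m _ _ => h m (by omega) (by omega))

lemma rowSum_sub_mem {s : ℕ} {i j : ℤ} (hj : j - 1 ≤ i + s)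
    (h : ∀ l, j - 1 - s ≤ l → l < i + s → x l ∈ S) :
    rowSum x s i j - vProd x i s * x (i + s) ∈ S := by
  rw [rowSum, ← Finset.insert_Icc_sub_one_right_eq_Icc hj, Finset.sum_insert (by simp),
    L1pow_add_self, mul_comm, add_sub_cancel_left]
  refine S.sum_mem fun l hl => ?_
  simp only [Finset.mem_Icc] at hl
  exact S.mul_mem (h l (by omega) (by omega)) (L1pow_mem fun m _ _ => h m (by omega) (by omega))

lemma colSum_sub_mem {s : ℕ} {i j : ℤ} (hi : j - s ≤ i + 1)
    (h : ∀ l, j - s ≤ l → l ≤ i + s → x l ∈ S) :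
    colSum x s i j - vProd x (j - s) s * x (j - s - 1) ∈ S := by
  have corner := L1pow_add_self x s (j - s)
  rw [sub_add_cancel] at corner
  rw [colSum, ← Finset.insert_Icc_add_one_left_eq_Icc hi, Finset.sum_insert (by simp), corner,
    mul_comm, add_sub_cancel_left]
  refine S.sum_mem fun l hl => ?_
  simp only [Finset.mem_Icc] at hl
  exact S.mul_mem (h _ (by omega) (by omega)) (L1pow_mem fun m _ _ => h m (by omega) (by omega))

lemma gammaTerm_mem {s : ℕ} {k : ℤ} (h : ∀ l, k - s - 1 ≤ l → l ≤ k + s + 1 → x l ∈ S) :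
    gammaTerm x s k ∈ S :=
  S.mul_mem (one_sub_mul_self_mem (h k (by omega) (by omega)))
    (S.add_mem (rowSum_mem fun l _ _ => h l (by omega) (by omega))
      (colSum_mem fun l _ _ => h l (by omega) (by omega)))

lemma gammaTerm_sub_up_mem {s : ℕ} {k : ℤ} (h : ∀ l, k - s - 1 ≤ l → l < k + s + 1 → x l ∈ S) :
    gammaTerm x s k - vProd x k (s + 1) * x (k + s + 1) ∈ S := by
  have split : gammaTerm x s k - vProd x k (s + 1) * x (k + s + 1) = (1 - x k * x k) *
      (rowSum x s (k + 1) (k + 1) - vProd x (k + 1) s * x (k + 1 + s) + colSum x s k k) := by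
    rw [gammaTerm, vProd_succ', add_right_comm k 1]
    ring
  rw [split]
  exact S.mul_mem (one_sub_mul_self_mem (h k (by omega) (by omega)))
    (S.add_mem (rowSum_sub_mem (by omega) fun l _ _ => h l (by omega) (by omega))
      (colSum_mem fun l _ _ => h l (by omega) (by omega)))

lemma gammaTerm_sub_down_mem {s : ℕ} {k : ℤ} (h : ∀ l, k - s - 1 < l → l ≤ k + s + 1 → x l ∈ S) :
    gammaTerm x s k - vProd x (k - s) (s + 1) * x (k - s - 1) ∈ S := by
  have split : gammaTerm x s k - vProd x (k - s) (s + 1) * x (k - s - 1) = (1 - x k * x k) *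
      (rowSum x s (k + 1) (k + 1) + (colSum x s k k - vProd x (k - s) s * x (k - s - 1))) := by
    rw [gammaTerm, vProd_succ, sub_add_cancel]
    ring
  rw [split]
  exact S.mul_mem (one_sub_mul_self_mem (h k (by omega) (by omega)))
    (S.add_mem (rowSum_mem fun l _ _ => h l (by omega) (by omega))
      (colSum_sub_mem (by omega) fun l _ _ => h l (by omega) (by omega)))

lemma GamSD_succ (N : ℕ) (u : ℕ → A) (x : ℤ → A) (k : ℤ) :
    GamSD (N + 1) u x k = GamSD N u x k + u (N + 1) * gammaTerm x N k := by
  rw [GamSD_eq_sum_gammaTerm, GamSD_eq_sum_gammaTerm, Finset.sum_range_succ]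
  ring

lemma GamSD_mem {N : ℕ} {u : ℕ → A} (hu : ∀ i, u i ∈ S) {k : ℤ}
    (h : ∀ l, k - N ≤ l → l ≤ k + N → x l ∈ S) : GamSD N u x k ∈ S := by
  rw [GamSD_eq_sum_gammaTerm]
  refine S.add_mem (S.sum_mem fun s hs => S.mul_mem (hu _) ?_)
    (S.mul_mem (intCast_mem S k) (h k (by omega) (by omega)))
  rw [Finset.mem_range] at hs
  exact gammaTerm_mem fun l _ _ => h l (by omega) (by omega)

lemma GamSD_sub_up_mem {N : ℕ} (hN : 1 ≤ N) {u : ℕ → A} (hu : ∀ i, u i ∈ S) {k : ℤ}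
    (h : ∀ l, k - N ≤ l → l < k + N → x l ∈ S) :
    GamSD N u x k - u N * (vProd x k N * x (k + N)) ∈ S := by
  obtain ⟨s, rfl⟩ := Nat.exists_eq_add_of_le' hN
  push_cast at h ⊢
  rw [GamSD_succ, add_sub_assoc, ← mul_sub, ← add_assoc]
  exact S.add_mem (GamSD_mem hu fun l _ _ => h l (by omega) (by omega))
    (S.mul_mem (hu _) (gammaTerm_sub_up_mem fun l _ _ => h l (by omega) (by omega)))

lemma GamSD_sub_down_mem {N : ℕ} (hN : 1 ≤ N) {u : ℕ → A} (hu : ∀ i, u i ∈ S) {k : ℤ}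
    (h : ∀ l, k - N < l → l ≤ k + N → x l ∈ S) :
    GamSD N u x k - u N * (vProd x (k - N + 1) N * x (k - N)) ∈ S := by
  obtain ⟨s, rfl⟩ := Nat.exists_eq_add_of_le' hN
  push_cast at h ⊢
  rw [GamSD_succ, add_sub_assoc, ← mul_sub, ← sub_sub, sub_add_cancel]
  exact S.add_mem (GamSD_mem hu fun l _ _ => h l (by omega) (by omega))
    (S.mul_mem (hu _) (gammaTerm_sub_down_mem fun l _ _ => h l (by omega) (by omega)))

end Locality

/-! ### Leading coefficients of Laurent series -/

section LeadingCoefficients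

variable {K : Type*} [Field K] {f g : LaurentSeries K} {a b m : ℤ} {c d : K}

lemma BigO.mono (hf : BigO f a) (h : m ≤ a) : BigO f m := fun i hi => hf i (hi.trans_le h)

lemma BigO.add (hf : BigO f m) (hg : BigO g m) : BigO (f + g) m := fun i hi => by
  rw [HahnSeries.coeff_add, hf i hi, hg i hi, add_zero]

lemma BigO.neg (hf : BigO f m) : BigO (-f) m := fun i hi => by
  rw [HahnSeries.coeff_neg, hf i hi, neg_zero]

lemma BigO.sub (hf : BigO f m) (hg : BigO g m) : BigO (f - g) m :=
  sub_eq_add_neg f g ▸ hf.add hg.neg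

lemma BigO.mul (hf : BigO f a) (hg : BigO g b) : BigO (f * g) (a + b) := fun i hi => by
  rw [HahnSeries.coeff_mul]
  refine Finset.sum_eq_zero fun ij hij => ?_
  have hsum := (Finset.mem_antidiagonal.mp hij).2.2
  rcases lt_or_ge ij.1 a with h | h
  · rw [hf _ h, zero_mul]
  · rw [hg _ (by omega), mul_zero]

lemma bigO_succ_iff : BigO f (m + 1) ↔ BigO f m ∧ f.coeff m = 0 := by
  refine ⟨fun h => ⟨h.mono (by omega), h m (by omega)⟩, fun h i hi => ?_⟩
  rcases (Int.lt_add_one_iff.mp hi).lt_or_eq with hlt | rfl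
  exacts [h.1 i hlt, h.2]

lemma bigO_single (m : ℤ) (c : K) : BigO (HahnSeries.single m c) m := fun _ hi =>
  HahnSeries.coeff_single_of_ne hi.ne

/-- `f = c t^m + O(t^{m+1})`, where `c = 0` is allowed. -/
def HasLead (f : LaurentSeries K) (m : ℤ) (c : K) : Prop := BigO f m ∧ f.coeff m = c

lemma BigO.hasLead (hf : BigO f m) : HasLead f m (f.coeff m) := ⟨hf, rfl⟩

lemma BigO.hasLead_zero (hf : BigO f a) (h : m < a) : HasLead f m 0 := ⟨hf.mono h.le, hf m h⟩

lemma HasLead.add (hf : HasLead f m c) (hg : HasLead g m d) : HasLead (f + g) m (c + d) :=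
  ⟨hf.1.add hg.1, by rw [HahnSeries.coeff_add, hf.2, hg.2]⟩

lemma HasLead.sub (hf : HasLead f m c) (hg : HasLead g m d) : HasLead (f - g) m (c - d) :=
  ⟨hf.1.sub hg.1, by rw [HahnSeries.coeff_sub, hf.2, hg.2]⟩

lemma HasLead.mul (hf : HasLead f a c) (hg : HasLead g b d) (hm : a + b = m) :
    HasLead (f * g) m (c * d) := by
  subst hm
  refine ⟨hf.1.mul hg.1, ?_⟩
  have tail : BigO (f - HahnSeries.single a c) (a + 1) :=
    bigO_succ_iff.mpr ⟨hf.1.sub (bigO_single a c), by simp [hf.2]⟩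
  rw [← sub_add_cancel f (HahnSeries.single a c), add_mul, HahnSeries.coeff_add,
    tail.mul hg.1 _ (by omega), zero_add, HahnSeries.coeff_single_mul, add_sub_cancel_left, hg.2]

lemma hasLead_one : HasLead (1 : LaurentSeries K) 0 1 :=
  ⟨bigO_single 0 1, HahnSeries.coeff_one.trans (if_pos rfl)⟩

lemma HasLead.of_mul_left (hf : HasLead f a c) (hc : c ≠ 0) (h : HasLead (f * g) m d) :
    HasLead g (m - a) (d / c) := by
  have hg : BigO g (m - a) := by
    rcases eq_or_ne g 0 with rfl | hg0
    · exact fun _ _ => HahnSeries.coeff_zero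
    have lead : HasLead g g.order (g.coeff g.order) :=
      ⟨fun i hi => HahnSeries.coeff_eq_zero_of_lt_order hi, rfl⟩
    refine lead.1.mono (le_of_not_gt fun hlt => ?_)
    have vanish := h.1 (a + g.order) (by omega)
    rw [(hf.mul lead rfl).2] at vanish
    exact mul_ne_zero hc (HahnSeries.coeff_order_eq_zero.not.mpr hg0) vanish
  refine ⟨hg, (eq_div_iff hc).mpr ?_⟩
  rw [mul_comm, ← (hf.mul hg.hasLead (add_sub_cancel a m)).2, h.2]

lemma HasLead.one_sub_mul_self (hf : HasLead f 0 c) : HasLead (1 - f * f) 0 (1 - c * c) :=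
  hasLead_one.sub (hf.mul hf (add_zero 0))

lemma HasLead.one_sub_mul_self_of_sq_eq_one (hf : HasLead f 0 c) (hc : c * c = 1) :
    HasLead (1 - f * f) 1 (-2 * c * f.coeff 1) := by
  have minus : HasLead (HahnSeries.single 0 c - f) 1 (-f.coeff 1) := by
    refine ⟨bigO_succ_iff.mpr ⟨(bigO_single 0 c).sub hf.1, by simp [hf.2]⟩, ?_⟩
    rw [HahnSeries.coeff_sub, HahnSeries.coeff_single_of_ne one_ne_zero, zero_sub]
  have plus : HasLead (HahnSeries.single 0 c + f) 0 (c + c) :=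
    HasLead.add ⟨bigO_single 0 c, HahnSeries.coeff_single_same 0 c⟩ hf
  have factor : 1 - f * f = (HahnSeries.single 0 c - f) * (HahnSeries.single 0 c + f) := by
    rw [mul_comm (_ - f), ← mul_self_sub_mul_self, HahnSeries.single_mul_single, hc, add_zero,
      HahnSeries.single_zero_one]
  rw [factor]
  convert minus.mul plus (add_zero 1) using 1
  ring

lemma hasLead_vProd {X : ℤ → LaurentSeries K} {k : ℤ} {j : ℕ}
    (h : ∀ l, k ≤ l → l < k + j → BigO (X l) 0) :
    HasLead (vProd X k j) 0 (vProd (fun l => (X l).coeff 0) k j) := by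
  induction j with
  | zero => exact vProd_zero X k ▸ vProd_zero (fun l => (X l).coeff 0) k ▸ hasLead_one
  | succ j ih =>
    push_cast at h
    rw [vProd_succ, vProd_succ]
    exact (ih fun l _ _ => h l (by omega) (by omega)).mul
      (h _ (by omega) (by omega)).hasLead.one_sub_mul_self (add_zero 0)

end LeadingCoefficients

section Derivations

variable {K : Type*} [Field K]

/-- Derivations of a ring over `ℤ`. Stating this for a variable `A` fixes the canonical `ℤ`-algebra
structure, where `LaurentSeries K` would also offer `HahnSeries.powerSeriesAlgebra`. -/
abbrev IntDerivation (A : Type*) [CommRing A] := Derivation ℤ A A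

/-- An additive map satisfying the Leibniz rule, as a derivation over `ℤ`. -/
def intDerivationOfLeibniz {A : Type*} [CommRing A] (φ : A →+ A)
    (leibniz : ∀ a b, φ (a * b) = a * φ b + b * φ a) : IntDerivation A :=
  Derivation.mk' φ.toIntLinearMap leibniz

lemma intDerivation_mul {A : Type*} [CommRing A] (D : IntDerivation A) (a b : A) :
    D (a * b) = a * D b + b * D a := D.leibniz a b

/-- The derivation of `K((t))` acting on the coefficient of `t^m` by `φ m`. -/
def gradedDerivation (φ : ℤ → K →+ K)
    (hφ : ∀ m n a b, φ (m + n) (a * b) = a * φ n b + b * φ m a) :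
    IntDerivation (LaurentSeries K) :=
  let φ' (f : LaurentSeries K) : LaurentSeries K :=
    { coeff m := φ m (f.coeff m)
      isPWO_support' := f.isPWO_support.mono fun m hm hf => hm (by simp [hf]) }
  have supp (f : LaurentSeries K) : (φ' f).support ⊆ f.support := fun m hm hf =>
    hm (by simp [φ', hf])
  intDerivationOfLeibniz (AddMonoidHom.mk' φ' fun f g => by ext m; simp [φ']) fun f g => by
    ext m
    change φ m ((f * g).coeff m) = (f * φ' g + g * φ' f).coeff m
    rw [mul_comm g, HahnSeries.coeff_add, HahnSeries.coeff_mul_right' g.isPWO_support (supp g),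
      HahnSeries.coeff_mul_left' f.isPWO_support (supp f), HahnSeries.coeff_mul, map_sum,
      ← Finset.sum_add_distrib]
    refine Finset.sum_congr rfl fun ij hij => ?_
    rw [← (Finset.mem_antidiagonal.mp hij).2.2, hφ, mul_comm (g.coeff ij.2)]

/-- The Euler derivation `t d/dt`. -/
def euler : IntDerivation (LaurentSeries K) :=
  gradedDerivation (fun m => AddMonoidHom.mulLeft (m : K)) fun m n a b => by
    simp only [AddMonoidHom.coe_mulLeft]
    push_cast
    ring

/-- The extension of a derivation of `K` to `K((t))`, acting on each coefficient. -/
def coeffwise (D : IntDerivation K) : IntDerivation (LaurentSeries K) :=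
  gradedDerivation (fun _ => (D : K →ₗ[ℤ] K).toAddMonoidHom) fun _ _ a b => D.leibniz a b

lemma coeff_euler (f : LaurentSeries K) (m : ℤ) : (euler f).coeff m = m * f.coeff m := rfl

lemma coeff_coeffwise (D : IntDerivation K) (f : LaurentSeries K) (m : ℤ) :
    (coeffwise D f).coeff m = D (f.coeff m) := rfl

/-- The variable `t`. -/
def tVar : LaurentSeries K := HahnSeries.single 1 1

lemma coeff_tVar_mul (f : LaurentSeries K) (m : ℤ) : (tVar * f).coeff m = f.coeff (m - 1) := by
  rw [tVar, HahnSeries.coeff_single_mul, one_mul]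

lemma coeff_of_euler_eq {f h : LaurentSeries K} (e : euler f = tVar * h) (m : ℤ) :
    h.coeff m = ((m + 1 : ℤ) : K) * f.coeff (m + 1) := by
  rw [← coeff_euler, e, coeff_tVar_mul, add_sub_cancel_right]

lemma HasLead.of_euler_eq {f h : LaurentSeries K} {m : ℤ} {c : K} (e : euler f = tVar * h)
    (hf : HasLead f m c) : HasLead h (m - 1) (m * c) := by
  refine ⟨fun i hi => ?_, ?_⟩
  · rw [coeff_of_euler_eq e, hf.1 _ (by omega), mul_zero]
  · rw [coeff_of_euler_eq e, sub_add_cancel, hf.2]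

lemma euler_coeffwise (D : IntDerivation K) (f : LaurentSeries K) :
    euler (coeffwise D f) = coeffwise D (euler f) := by
  ext m
  simp only [coeff_euler, coeff_coeffwise, D.leibniz, D.map_intCast, smul_eq_mul, mul_zero,
    add_zero]

lemma coeffwise_tVar (D : IntDerivation K) : coeffwise D tVar = 0 := by
  ext m
  rw [coeff_coeffwise, tVar, HahnSeries.coeff_single]
  split_ifs <;> simp

lemma IsSolSD.isTransported {x : ℤ → LaurentSeries K} (h : IsSolSD x) :
    IsTransported euler tVar x x := fun k => by
  ext m
  rw [coeff_euler, coeff_tVar_mul, ← h k (m - 1), sub_add_cancel]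

end Derivations

section CoefficientSubrings

variable {K : Type*} [Field K] {T : Subring K} {f g : LaurentSeries K} {a b m n s : ℤ}

/-- The coefficients of `t^i` in `f` lie in `T` for all `i < m`. -/
def CoeffMem (T : Subring K) (f : LaurentSeries K) (m : ℤ) : Prop := ∀ i < m, f.coeff i ∈ T

lemma BigO.coeffMem (hf : BigO f m) : CoeffMem T f m := fun i hi => hf i hi ▸ T.zero_mem

lemma CoeffMem.mono (hf : CoeffMem T f a) (h : m ≤ a) : CoeffMem T f m :=
  fun i hi => hf i (hi.trans_le h)

lemma CoeffMem.sub (hf : CoeffMem T f m) (hg : CoeffMem T g m) : CoeffMem T (f - g) m :=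
  fun i hi => by
  rw [HahnSeries.coeff_sub]
  exact T.sub_mem (hf i hi) (hg i hi)

lemma coeffMem_one (m : ℤ) : CoeffMem T (1 : LaurentSeries K) m := fun i _ => by
  rw [HahnSeries.coeff_one]
  split_ifs
  exacts [T.one_mem, T.zero_mem]

lemma CoeffMem.mul (hf : BigO f a) (hg : BigO g b) (hfm : CoeffMem T f m) (hgn : CoeffMem T g n)
    (hs : s ≤ m + b) (hs' : s ≤ n + a) : CoeffMem T (f * g) s := fun i hi => by
  rw [HahnSeries.coeff_mul]
  refine T.sum_mem fun ij hij => ?_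
  have hsum := (Finset.mem_antidiagonal.mp hij).2.2
  rcases lt_or_ge ij.1 a with h | h
  · exact hf _ h ▸ (zero_mul (g.coeff ij.2)).symm ▸ T.zero_mem
  rcases lt_or_ge ij.2 b with h' | h'
  · exact hg _ h' ▸ (mul_zero (f.coeff ij.1)).symm ▸ T.zero_mem
  exact T.mul_mem (hfm _ (by omega)) (hgn _ (by omega))

lemma CoeffMem.sub_single (hf : CoeffMem T f m) :
    CoeffMem T (f - HahnSeries.single m (f.coeff m)) (m + 1) := fun i hi => by
  rcases (Int.lt_add_one_iff.mp hi).lt_or_eq with h | rfl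
  · exact hf.sub (bigO_single m _).coeffMem i h
  · simp

lemma coeff_mul_sub (f g : LaurentSeries K) (m b : ℤ) :
    (f * g).coeff (m + b) - f.coeff m * g.coeff b =
      ((f - HahnSeries.single m (f.coeff m)) * g).coeff (m + b) := by
  rw [sub_mul, HahnSeries.coeff_sub, HahnSeries.coeff_single_mul, add_sub_cancel_left]

lemma coeff_mul_sub_mem (hf : BigO f a) (hg : BigO g b) (hfm : CoeffMem T f m)
    (hgn : CoeffMem T g n) (ham : a ≤ m) (hn : m + b < n + a) :
    (f * g).coeff (m + b) - f.coeff m * g.coeff b ∈ T := by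
  rw [coeff_mul_sub]
  exact CoeffMem.mul (s := m + b + 1) (hf.sub ((bigO_single m _).mono ham)) hg hfm.sub_single hgn
    (by omega) (by omega) _ (by omega)

lemma coeff_mul_self_sub_mem (hf : BigO f a) (hfm : CoeffMem T f m) (ham : a < m) :
    (f * f).coeff (m + a) - 2 * f.coeff a * f.coeff m ∈ T := by
  have tail_bigO := hf.sub ((bigO_single m (f.coeff m)).mono ham.le)
  have key := coeff_mul_sub_mem hf tail_bigO hfm hfm.sub_single ham.le (by omega)
  rw [mul_comm f, ← coeff_mul_sub, HahnSeries.coeff_sub,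
    HahnSeries.coeff_single_of_ne ham.ne, sub_zero] at key
  convert key using 1
  ring

/-- At order `m`, an equation `F' = (1 - F²) W` is linear in the coefficient of `t^m` in `F`, with
eigenvalue `m + 2cd` read off the leading coefficients `c` of `F` and `d` of `W`. -/
lemma eigenvalue_mul_coeff_mem {F W : LaurentSeries K} {o w : ℤ} {c d : K}
    (ode : euler F = tVar * ((1 - F * F) * W)) (hF : HasLead F o c) (hW : HasLead W w d)
    (how : o + w = -1) (hom : o < m) (hFm : CoeffMem T F m) (hv : BigO (1 - F * F) s)
    (hs : s ≤ m + o) (hWm : CoeffMem T W (m - s)) :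
    (m + 2 * c * d) * F.coeff m ∈ T := by
  have hvm : CoeffMem T (1 - F * F) (m + o) :=
    (coeffMem_one _).sub (hFm.mul hF.1 hF.1 hFm le_rfl le_rfl)
  have product := coeff_mul_sub_mem hv hW.1 hvm hWm hs (by omega)
  rw [coeff_of_euler_eq ode, show m + o + w + 1 = m by omega, hW.2, HahnSeries.coeff_sub] at product
  have square := T.mul_mem (T.sub_mem (coeffMem_one (m + o + 1) _ (lt_add_one _))
    (hF.2 ▸ coeff_mul_self_sub_mem hF.1 hFm hom)) (hW.2 ▸ hWm w (by omega))
  convert T.add_mem product square using 1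
  ring

/-- The Laurent series all of whose coefficients lie in `T`. -/
def seriesSubring (T : Subring K) : Subring (LaurentSeries K) where
  carrier := {f | ∀ i, f.coeff i ∈ T}
  mul_mem' hf hg i := by
    rw [HahnSeries.coeff_mul]
    exact T.sum_mem fun _ _ => T.mul_mem (hf _) (hg _)
  one_mem' i := coeffMem_one (i + 1) i (lt_add_one i)
  add_mem' hf hg i := T.add_mem (hf i) (hg i)
  zero_mem' _ := T.zero_mem
  neg_mem' hf i := T.neg_mem (hf i)

/-- The power series whose coefficients of `t^i`, `i < m`, lie in `T`. -/
def regularSubring (T : Subring K) (m : ℤ) : Subring (LaurentSeries K) where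
  carrier := {f | BigO f 0 ∧ CoeffMem T f m}
  mul_mem' hf hg := ⟨hf.1.mul hg.1, hf.2.mul hf.1 hg.1 hg.2 (add_zero m).ge (add_zero m).ge⟩
  one_mem' := ⟨hasLead_one.1, coeffMem_one m⟩
  add_mem' hf hg := ⟨hf.1.add hg.1, fun i hi => T.add_mem (hf.2 i hi) (hg.2 i hi)⟩
  zero_mem' := ⟨fun _ _ => rfl, fun _ _ => T.zero_mem⟩
  neg_mem' hf := ⟨hf.1.neg, fun i hi => T.neg_mem (hf.2 i hi)⟩

/-- The elements of `K` killed by the derivation `D`. -/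
def constants (D : IntDerivation K) : Subring K where
  carrier := {a | D a = 0}
  mul_mem' {a b} (ha : D a = 0) (hb : D b = 0) := show D (a * b) = 0 by
    rw [D.leibniz, ha, hb, smul_zero, smul_zero, add_zero]
  one_mem' := D.map_one_eq_zero
  add_mem' {a b} (ha : D a = 0) (hb : D b = 0) := show D (a + b) = 0 by
    rw [map_add, ha, hb, add_zero]
  zero_mem' := map_zero D
  neg_mem' {a} (ha : D a = 0) := show D (-a) = 0 by rw [map_neg, ha, neg_zero]

lemma bigO_coeffwise_iff {D : IntDerivation K} :
    BigO (coeffwise D f) m ↔ CoeffMem (constants D) f m := Iff.rfl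

/-- `T` is closed under division by nonzero integers. -/
def IntDivClosed (T : Subring K) : Prop := ∀ (z : ℤ) (a : K), z ≠ 0 → z * a ∈ T → a ∈ T

lemma intDivClosed_constants [CharZero K] (D : IntDerivation K) : IntDivClosed (constants D) := by
  intro z a hz (h : D (z * a) = 0)
  rw [D.leibniz, D.map_intCast, smul_zero, add_zero, smul_eq_mul] at h
  exact (mul_eq_zero.mp h).resolve_left (Int.cast_ne_zero.mpr hz)

end CoefficientSubrings

/-! ### Solutions with a simple pole at index zero -/

section SingularSolution

variable {K : Type*} [Field K] {X : ℤ → LaurentSeries K} {ε p q : K} {T : Subring K}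
  {M k m : ℤ}

/-- A Laurent solution of the self-dual Toeplitz lattice whose only pole is at index `0`, with
`X_0 = -ε/(2t) + O(1)` and `X_{±1} = ∓ε + 4ε a_± t + O(t²)`, where `a_+ = p` and `a_- = q`. -/
structure IsSingularSolution (X : ℤ → LaurentSeries K) (ε p q : K) : Prop where
  transported : IsTransported euler tVar X X
  sign : ε * ε = 1
  bigO : ∀ k, k ≠ 0 → BigO (X k) 0
  lead_zero : HasLead (X 0) (-1) (-ε / 2)
  coeff_one_zero : (X 1).coeff 0 = -ε
  coeff_one_one : (X 1).coeff 1 = 4 * ε * p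
  coeff_neg_one_zero : (X (-1)).coeff 0 = ε
  coeff_neg_one_one : (X (-1)).coeff 1 = 4 * ε * q

/-- The coefficient of `t^i` in the `k`-th component of a singular solution does not depend on the
initial values at indices `≥ M` as soon as `i < determinacyOrder M k`. -/
def determinacyOrder (M k : ℤ) : ℤ := if k = 0 then M - 1 else if k = 1 then M else M - k

/-- The order in which the coefficients of `t^i` in the `k`-th components of a singular solution are
successively determined by the equations. -/
def coeffLevel (k i : ℤ) : ℤ := if k = 0 then 2 * i + 3 else 2 * i

namespace IsSingularSolution

variable (hX : IsSingularSolution X ε p q)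
include hX

lemma lead_one : HasLead (X 1) 0 (-ε) := ⟨hX.bigO 1 one_ne_zero, hX.coeff_one_zero⟩

lemma lead_neg_one : HasLead (X (-1)) 0 ε := ⟨hX.bigO (-1) (by decide), hX.coeff_neg_one_zero⟩

lemma sign_mem (T : Subring K) : ε ∈ T := by
  rcases mul_self_eq_one_iff.mp hX.sign with rfl | rfl
  exacts [T.one_mem, T.neg_mem T.one_mem]

lemma lead_v (hk : k ≠ 0) : HasLead (1 - X k * X k) 0 (1 - (X k).coeff 0 * (X k).coeff 0) :=
  (hX.bigO k hk).hasLead.one_sub_mul_self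

lemma lead_v_one : HasLead (1 - X 1 * X 1) 1 (8 * p) := by
  convert hX.lead_one.one_sub_mul_self_of_sq_eq_one (by rw [neg_mul_neg, hX.sign]) using 1
  rw [hX.coeff_one_one]
  linear_combination -8 * p * hX.sign

lemma lead_v_neg_one : HasLead (1 - X (-1) * X (-1)) 1 (-8 * q) := by
  convert hX.lead_neg_one.one_sub_mul_self_of_sq_eq_one hX.sign using 1
  rw [hX.coeff_neg_one_one]
  linear_combination 8 * q * hX.sign

lemma lead_diff_zero : HasLead (X 1 - X (-1)) 0 (-2 * ε) := by
  convert hX.lead_one.sub hX.lead_neg_one using 1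
  ring

lemma coeff_mem_of_two_le_abs (hk : k ≤ -2 ∨ 2 ≤ k) (hT : IntDivClosed T) (hm : 0 < m)
    (hself : CoeffMem T (X k) m) (hnext : CoeffMem T (X (k + 1)) m)
    (hprev : CoeffMem T (X (k - 1)) m) : (X k).coeff m ∈ T := by
  have hv : 1 - X k * X k ∈ regularSubring T m :=
    one_sub_mul_self_mem ⟨hX.bigO k (by omega), hself⟩
  have hdiff : X (k + 1) - X (k - 1) ∈ regularSubring T m :=
    sub_mem ⟨hX.bigO _ (by omega), hnext⟩ ⟨hX.bigO _ (by omega), hprev⟩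
  refine hT m _ hm.ne' ?_
  rw [← coeff_euler, hX.transported k, coeff_tVar_mul]
  exact (mul_mem hv hdiff).2 _ (sub_one_lt m)

variable [CharZero K]

lemma lead_v_zero : HasLead (1 - X 0 * X 0) (-2) (-1 / 4) := by
  convert (hasLead_one.1.hasLead_zero (by decide)).sub
    (hX.lead_zero.mul (m := -2) hX.lead_zero rfl) using 1
  linear_combination (1 / 4) * hX.sign

lemma lead_diff_one : HasLead (X 2 - X 0) (-1) (ε / 2) := by
  convert ((hX.bigO 2 two_ne_zero).hasLead_zero (by decide)).sub hX.lead_zero using 1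
  ring

lemma lead_diff_neg_one : HasLead (X 0 - X (-2)) (-1) (-ε / 2) := by
  convert hX.lead_zero.sub ((hX.bigO (-2) (by decide)).hasLead_zero (by decide)) using 1
  ring

lemma coeff_one_mem (hT : IntDivClosed T) (hm : 2 ≤ m) (hself : CoeffMem T (X 1) m)
    (htwo : CoeffMem T (X 2) (m - 1)) (hzero : CoeffMem T (X 0) (m - 1)) :
    (X 1).coeff m ∈ T := by
  refine hT (m - 1) _ (by omega) ?_
  convert eigenvalue_mul_coeff_mem (hX.transported 1) hX.lead_one hX.lead_diff_one rfl (by omega)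
    hself hX.lead_v_one.1 (by omega) (htwo.sub hzero) using 2
  push_cast
  linear_combination hX.sign

lemma coeff_neg_one_mem (hT : IntDivClosed T) (hm : 2 ≤ m) (hself : CoeffMem T (X (-1)) m)
    (hzero : CoeffMem T (X 0) (m - 1)) (hnegtwo : CoeffMem T (X (-2)) (m - 1)) :
    (X (-1)).coeff m ∈ T := by
  refine hT (m - 1) _ (by omega) ?_
  convert eigenvalue_mul_coeff_mem (hX.transported (-1)) hX.lead_neg_one hX.lead_diff_neg_one rfl
    (by omega) hself hX.lead_v_neg_one.1 (by omega) (hzero.sub hnegtwo) using 2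
  push_cast
  linear_combination hX.sign

lemma coeff_zero_mem (hT : IntDivClosed T) (hm : 0 ≤ m) (hself : CoeffMem T (X 0) m)
    (hone : CoeffMem T (X 1) (m + 2)) (hnegone : CoeffMem T (X (-1)) (m + 2)) :
    (X 0).coeff m ∈ T := by
  refine hT (m + 2) _ (by omega) ?_
  convert eigenvalue_mul_coeff_mem (hX.transported 0) hX.lead_zero hX.lead_diff_zero rfl (by omega)
    hself hX.lead_v_zero.1 (by omega) ((hone.sub hnegone).mono (by omega)) using 2
  push_cast
  linear_combination -2 * hX.sign

lemma coeff_mem_of_lower_level {i : ℤ} (hT : IntDivClosed T) (hp : p ∈ T) (hq : q ∈ T)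
    (hb : k ≤ -2 ∨ 2 ≤ k → k < M → (X k).coeff 0 ∈ T) (hi : i < determinacyOrder M k)
    (lower : ∀ l j, coeffLevel l j < coeffLevel k i → j < determinacyOrder M l →
      (X l).coeff j ∈ T) : (X k).coeff i ∈ T := by
  have coeffMem {l m : ℤ}
      (h : ∀ j < m, coeffLevel l j < coeffLevel k i ∧ j < determinacyOrder M l) :
      CoeffMem T (X l) m := fun j hj => lower l j (h j hj).1 (h j hj).2
  have hε := hX.sign_mem T
  have four_mul_mem {a : K} (ha : a ∈ T) : 4 * ε * a ∈ T :=
    T.mul_mem (T.mul_mem (ofNat_mem T 4) hε) ha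
  rcases (by omega : k = 0 ∨ k = 1 ∨ k = -1 ∨ (k ≤ -2 ∨ 2 ≤ k)) with rfl | rfl | rfl | hk
  · rcases (by omega : i < -1 ∨ i = -1 ∨ 0 ≤ i) with hneg | rfl | hm
    · exact hX.lead_zero.1.coeffMem i hneg
    · rw [hX.lead_zero.2]
      refine hT 2 _ two_ne_zero ?_
      rw [Int.cast_ofNat, mul_div_cancel₀ _ two_ne_zero]
      exact T.neg_mem hε
    · exact hX.coeff_zero_mem hT hm (coeffMem (by grind [coeffLevel]))
        (coeffMem (by grind [coeffLevel, determinacyOrder]))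
        (coeffMem (by grind [coeffLevel, determinacyOrder]))
  · rcases (by omega : i < 0 ∨ i = 0 ∨ i = 1 ∨ 2 ≤ i) with hneg | rfl | rfl | hm
    · exact hX.lead_one.1.coeffMem i hneg
    · exact hX.coeff_one_zero ▸ T.neg_mem hε
    · exact hX.coeff_one_one ▸ four_mul_mem hp
    · exact hX.coeff_one_mem hT hm (coeffMem (by grind [coeffLevel]))
        (coeffMem (by grind [coeffLevel, determinacyOrder]))
        (coeffMem (by grind [coeffLevel, determinacyOrder]))
  · rcases (by omega : i < 0 ∨ i = 0 ∨ i = 1 ∨ 2 ≤ i) with hneg | rfl | rfl | hm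
    · exact hX.lead_neg_one.1.coeffMem i hneg
    · exact hX.coeff_neg_one_zero ▸ hε
    · exact hX.coeff_neg_one_one ▸ four_mul_mem hq
    · exact hX.coeff_neg_one_mem hT hm (coeffMem (by grind [coeffLevel]))
        (coeffMem (by grind [coeffLevel, determinacyOrder]))
        (coeffMem (by grind [coeffLevel, determinacyOrder]))
  · rcases (by omega : i < 0 ∨ i = 0 ∨ 0 < i) with hneg | rfl | hm
    · exact (hX.bigO k (by omega)).coeffMem i hneg
    · exact hb hk (by grind [determinacyOrder])
    · exact hX.coeff_mem_of_two_le_abs hk hT hm (coeffMem (by grind [coeffLevel]))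
        (coeffMem (by grind [coeffLevel, determinacyOrder]))
        (coeffMem (by grind [coeffLevel, determinacyOrder]))

/-- The equations determine each coefficient in terms of those of lower level, up to a nonzero
integer factor, except for the free initial values. -/
lemma coeffMem_determinacyOrder (hT : IntDivClosed T) (hp : p ∈ T) (hq : q ∈ T)
    (hb : ∀ k, k ≤ -2 ∨ 2 ≤ k → k < M → (X k).coeff 0 ∈ T) (k : ℤ) :
    CoeffMem T (X k) (determinacyOrder M k) := by
  suffices step : ∀ (s : ℕ) (k i : ℤ), coeffLevel k i < s → i < determinacyOrder M k →
      (X k).coeff i ∈ T from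
    fun i hi => step (coeffLevel k i + 1).toNat k i (by omega) hi
  intro s
  induction s with
  | zero =>
    intro k i hs _
    rcases eq_or_ne k 0 with rfl | hk
    · exact hX.lead_zero.1.coeffMem i (by grind [coeffLevel])
    · exact (hX.bigO k hk).coeffMem i (by grind [coeffLevel])
  | succ s ih =>
    intro k i hs hi
    exact hX.coeff_mem_of_lower_level hT hp hq (hb k) hi fun l j hj => ih l j (by omega)

lemma mem_seriesSubring (hT : IntDivClosed T) (hp : p ∈ T) (hq : q ∈ T)
    (hb : ∀ k, k ≤ -2 ∨ 2 ≤ k → (X k).coeff 0 ∈ T) (k : ℤ) : X k ∈ seriesSubring T := fun i =>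
  hX.coeffMem_determinacyOrder (M := |k| + |i| + 2) hT hp hq (fun k hk _ => hb k hk) k i
    (by grind [determinacyOrder])

end IsSingularSolution

end SingularSolution

/-! ### Propagation of variations -/

section Variation

variable {K : Type*} [Field K] {D : IntDerivation K} {X g : ℤ → LaurentSeries K} {k m a o M : ℤ}
  {c d : K}

lemma IsTransported.hasLead_variation (h : IsTransported euler tVar X g)
    (hself : BigO (coeffwise D (g k)) m)
    (hcross : HasLead (X k * coeffwise D (X k) * (g (k + 1) - g (k - 1))) (m - 1) d) :
    HasLead ((1 - X k * X k) * (coeffwise D (g (k + 1)) - coeffwise D (g (k - 1)))) (m - 1)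
      (m * D ((g k).coeff m) + 2 * d) := by
  have linear := hself.hasLead.of_euler_eq
    (h.linearised (fun f => euler_coeffwise D f) (coeffwise_tVar D) k)
  convert linear.add (hcross.add hcross) using 1
  · ring
  · rw [coeff_coeffwise, two_mul]

lemma IsTransported.bigO_variation_next (h : IsTransported euler tVar X g)
    (hv : HasLead (1 - X k * X k) a c) (hc : c ≠ 0) (hself : BigO (coeffwise D (g k)) m)
    (hcross : HasLead (X k * coeffwise D (X k) * (g (k + 1) - g (k - 1))) (m - 1) d)
    (hprev : BigO (coeffwise D (g (k - 1))) o) (ho : a + o = m - 1) :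
    BigO (coeffwise D (g (k + 1))) o := by
  have diff := (hv.of_mul_left hc (h.hasLead_variation hself hcross)).1
  rw [← ho, add_sub_cancel_left] at diff
  exact sub_add_cancel (coeffwise D (g (k + 1))) _ ▸ diff.add hprev

lemma IsTransported.variation_balance (h : IsTransported euler tVar X g)
    (hv : HasLead (1 - X k * X k) a c) (hself : BigO (coeffwise D (g k)) m)
    (hcross : HasLead (X k * coeffwise D (X k) * (g (k + 1) - g (k - 1))) (m - 1) d)
    (hnext : BigO (coeffwise D (g (k + 1))) o) (hprev : BigO (coeffwise D (g (k - 1))) (o + 1))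
    (ho : a + o = m - 1) :
    c * D ((g (k + 1)).coeff o) = m * D ((g k).coeff m) + 2 * d := by
  have product := hv.mul (hnext.hasLead.sub (hprev.hasLead_zero (lt_add_one o))) ho
  rw [← (h.hasLead_variation hself hcross).2, product.2, sub_zero, coeff_coeffwise]

lemma hasLead_cross_zero {b : ℤ} (hXk : BigO (X k) 0) (hvar : BigO (coeffwise D (X k)) a)
    (hnext : BigO (g (k + 1)) b) (hprev : BigO (g (k - 1)) b) (hm : m < a + b) :
    HasLead (X k * coeffwise D (X k) * (g (k + 1) - g (k - 1))) m 0 :=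
  ((hXk.mul hvar).mul (hnext.sub hprev)).hasLead_zero (by rwa [zero_add])

namespace IsSingularSolution

variable {ε p q : K} (hX : IsSingularSolution X ε p q)
  (hdet : ∀ k, BigO (coeffwise D (X k)) (determinacyOrder M k))
include hX hdet

lemma factorial_mul_variation (j : ℕ) (hj : j + 2 ≤ M) :
    (j.factorial : K) * D ((X (M - j)).coeff j) =
      vProd (fun l => (X l).coeff 0) (M - j) j * D ((X M).coeff 0) := by
  induction j with
  | zero => simp [vProd_zero]
  | succ j ih =>
    push_cast at hj ⊢
    have hself := (hdet (M - (j + 1))).mono (m := j + 1) (by grind [determinacyOrder])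
    have hcross := hasLead_cross_zero (m := j + 1 - 1) (hX.bigO _ (by omega)) hself
      (hX.bigO (M - (j + 1) + 1) (by omega)) (hX.bigO (M - (j + 1) - 1) (by omega)) (by omega)
    have balance := hX.transported.variation_balance (o := j) (hX.lead_v (by omega)) hself hcross
      ((hdet _).mono (by grind [determinacyOrder])) ((hdet _).mono (by grind [determinacyOrder]))
      (by omega)
    have site : M - (j + 1) + 1 = M - j := by ring
    rw [site] at balance
    rw [vProd_succ', site, mul_assoc, ← ih (by omega), Nat.factorial_succ]
    push_cast at balance ⊢
    linear_combination -(j.factorial : K) * balance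

variable [CharZero K]

lemma variation_balance_one :
    8 * p * D ((X 2).coeff (M - 2)) = (M - 1) * D ((X 1).coeff M) := by
  have hself : BigO (coeffwise D (X 1)) M := hdet 1
  have hcross := ((hX.lead_one.mul hself.hasLead (zero_add M)).mul hX.lead_diff_one
    (m := M - 1) (by omega))
  have balance : 8 * p * D ((X 2).coeff (M - 2)) = _ :=
    hX.transported.variation_balance (k := 1) (o := M - 2) hX.lead_v_one hself hcross (hdet 2)
      ((hdet 0).mono (by grind [determinacyOrder])) (by omega)
  rw [coeff_coeffwise] at balance
  linear_combination balance - D ((X 1).coeff M) * hX.sign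

lemma variation_balance_zero :
    -1 / 4 * D ((X 1).coeff M) = (M + 1) * D ((X 0).coeff (M - 1)) := by
  have hself : BigO (coeffwise D (X 0)) (M - 1) := hdet 0
  have hcross := ((hX.lead_zero.mul hself.hasLead (m := M - 2) (by omega)).mul hX.lead_diff_zero
    (m := M - 1 - 1) (by omega))
  have balance := hX.transported.variation_balance (o := M) hX.lead_v_zero hself hcross
    (hdet 1) (hdet (0 - 1)) (by omega)
  rw [coeff_coeffwise] at balance
  push_cast at balance
  linear_combination balance + 2 * D ((X 0).coeff (M - 1)) * hX.sign

lemma variation_balance_neg_one :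
    -8 * q * D ((X 0).coeff (M - 1)) = M * D ((X (-1)).coeff (M + 1)) := by
  have hself : BigO (coeffwise D (X (-1))) (M + 1) := hdet (-1)
  have hcross := ((hX.lead_neg_one.mul hself.hasLead (zero_add _)).mul hX.lead_diff_neg_one
    (m := M + 1 - 1) (by omega))
  have balance := hX.transported.variation_balance (o := M - 1) hX.lead_v_neg_one hself hcross
    (hdet 0) ((hdet (-1 - 1)).mono (by grind [determinacyOrder])) (by omega)
  rw [coeff_coeffwise] at balance
  push_cast at balance
  linear_combination balance - D ((X (-1)).coeff (M + 1)) * hX.sign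

/-- The variation caused by the initial value at index `M = r + 2`, read across the pole. -/
lemma factorial_mul_variation_neg_one {r : ℕ} (hr : M = r + 2) :
    ((r + 3).factorial : K) * D ((X (-1)).coeff (r + 3)) =
      16 * p * q * vProd (fun l => (X l).coeff 0) 2 r * D ((X (r + 2)).coeff 0) := by
  subst hr
  have left := hX.variation_balance_neg_one hdet
  have center := hX.variation_balance_zero hdet
  have right := hX.variation_balance_one hdet
  have far := hX.factorial_mul_variation hdet r le_rfl
  rw [add_sub_cancel_left] at far
  rw [show (r : ℤ) + 2 + 1 = r + 3 by ring] at left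
  rw [add_sub_cancel_right] at right
  simp only [Nat.factorial_succ]
  push_cast at left center right ⊢
  linear_combination 16 * p * q * far - (r.factorial : K) * ((r + 3) * (r + 1) * left
    - 8 * q * (r + 1) * center + 2 * q * right)

end IsSingularSolution

end Variation

/-! ### Families transported along a singular solution -/

section RecursionFamily

variable {K : Type*} [Field K] {T : Subring K} {N : ℕ} {w : LaurentSeries K}
  {X g : ℤ → LaurentSeries K} {k m : ℤ}

/-- The features of the recursion polynomials `Γ_k` evaluated on a solution `X` that determine their
constant term at a pole: they are transported by the flow, and `g_k` is a polynomial in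
`X_{k-N}, …, X_{k+N}` which is affine in `X_{k+N}` with slope `w v_k ⋯ v_{k+N-1}`. -/
structure IsRecursionFamily (T : Subring K) (N : ℕ) (w : LaurentSeries K)
    (X g : ℤ → LaurentSeries K) : Prop where
  transported : IsTransported euler tVar X g
  weight_mem : ∀ m, w ∈ regularSubring T m
  sub_mem : ∀ m k : ℤ, (∀ l, k - N ≤ l → l < k + N → X l ∈ regularSubring T m) →
    g k - w * (vProd X k N * X (k + N)) ∈ regularSubring T m

lemma vProd_mem {A : Type*} [CommRing A] {S : Subring A} {x : ℤ → A} {j : ℕ}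
    (h : ∀ l, k ≤ l → l < k + j → x l ∈ S) : vProd x k j ∈ S :=
  S.prod_mem fun i hi => one_sub_mul_self_mem <|
    h _ (by omega) (by have := Finset.mem_range.mp hi; omega)

lemma IsTransported.bigO_next {a : ℤ} {c : K} (h : IsTransported euler tVar X g)
    (hv : HasLead (1 - X k * X k) a c) (hc : c ≠ 0) (hself : BigO (g k) 0)
    (hprev : BigO (g (k - 1)) (-a)) : BigO (g (k + 1)) (-a) := by
  have flow := hself.hasLead.of_euler_eq (h k)
  have regular : BigO ((1 - X k * X k) * (g (k + 1) - g (k - 1))) (-1 + 1) :=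
    bigO_succ_iff.mpr ⟨flow.1, by simpa using flow.2⟩
  have diff := (hv.of_mul_left hc regular.hasLead).1
  rw [neg_add_cancel, zero_sub] at diff
  exact sub_add_cancel (g (k + 1)) (g (k - 1)) ▸ diff.add hprev

namespace IsRecursionFamily

variable (hg : IsRecursionFamily T N w X g)
include hg

lemma mem_regular (h : ∀ l, k - N ≤ l → l ≤ k + N → X l ∈ regularSubring T m) :
    g k ∈ regularSubring T m := by
  have slope : vProd X k N ∈ regularSubring T m := vProd_mem fun l _ _ => h l (by omega) (by omega)
  have affine := hg.sub_mem m k fun l hl hl' => h l hl hl'.le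
  exact sub_add_cancel (g k) _ ▸ add_mem affine (mul_mem (hg.weight_mem m)
    (mul_mem slope (h _ (by omega) le_rfl)))

variable {ε p q : K} (hX : IsSingularSolution X ε p q)
  (hb : ∀ k ≤ -2, 1 - (X k).coeff 0 * (X k).coeff 0 ≠ 0)
include hX hb

lemma bigO_of_le_neg_one (hk : k ≤ -1) : BigO (g k) 0 := by
  have low (k : ℤ) (hk : k ≤ -1 - N) : BigO (g k) 0 :=
    (hg.mem_regular (m := 0) fun l _ _ =>
      have hl := hX.bigO l (by omega)
      ⟨hl, hl.coeffMem⟩).1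
  have pair : ∀ k, k ≤ -1 → BigO (g k) 0 ∧ BigO (g (k - 1)) 0 :=
    forall_of_le_of_step_up (m := -1 - N) (fun k hk _ => ⟨low k hk, low (k - 1) (by omega)⟩)
      fun k ih hk => by
        obtain ⟨hself, hprev⟩ := ih (by omega)
        have next := hg.transported.bigO_next (hX.lead_v (by omega)) (hb _ (by omega)) hself
          (neg_zero (G := ℤ) ▸ hprev)
        rw [sub_add_cancel, neg_zero] at next
        exact ⟨next, hself⟩
  exact (pair k hk).1

lemma bigO_zero [CharZero K] (hq : q ≠ 0) : BigO (g 0) (-1) :=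
  hg.transported.bigO_next (k := -1) hX.lead_v_neg_one (mul_ne_zero (by norm_num) hq)
    (hg.bigO_of_le_neg_one hX hb le_rfl)
    ((hg.bigO_of_le_neg_one hX hb (by omega)).mono (by omega))

end IsRecursionFamily

lemma IsSingularSolution.residue_eq [CharZero K] {ε p q : K} (hX : IsSingularSolution X ε p q)
    (h : IsTransported euler tVar X g) (hzero : BigO (g 0) (-1)) (hone : BigO (g 1) 0)
    (hnegone : BigO (g (-1)) 0) :
    (g 0).coeff (-1) = ((g 1).coeff 0 - (g (-1)).coeff 0) / 4 := by
  have flow := (hzero.hasLead.of_euler_eq (h 0)).2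
  have product := (hX.lead_v_zero.mul (hone.hasLead.sub hnegone.hasLead) (add_zero (-2))).2
  have balance := product.symm.trans flow
  push_cast at balance
  linear_combination balance

end RecursionFamily

section RecursionVariation

variable {K : Type*} [Field K] {D : IntDerivation K} {N : ℕ} {w : LaurentSeries K}
  {X g : ℤ → LaurentSeries K} {ε p q : K}

lemma IsSingularSolution.bigO_variation [CharZero K] (hX : IsSingularSolution X ε p q) {M : ℤ}
    (hp : D p = 0) (hq : D q = 0)
    (hb : ∀ k, k ≤ -2 ∨ 2 ≤ k → k < M → D ((X k).coeff 0) = 0) (k : ℤ) :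
    BigO (coeffwise D (X k)) (determinacyOrder M k) :=
  bigO_coeffwise_iff.mpr (hX.coeffMem_determinacyOrder (intDivClosed_constants D) hp hq hb k)

namespace IsRecursionFamily

variable (hg : IsRecursionFamily (constants D) N w X g) (hX : IsSingularSolution X ε p q)
  (hdet : ∀ k, BigO (coeffwise D (X k)) (determinacyOrder (N + 1) k))
include hg hX hdet

lemma bigO_variation_row_low : BigO (coeffwise D (g (-2 - N))) (N + 3) :=
  (hg.mem_regular (m := N + 3) fun l _ _ =>
    ⟨hX.bigO l (by omega), (hdet l).mono (by grind [determinacyOrder])⟩).2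

lemma hasLead_variation_row_base : HasLead (coeffwise D (g (-1 - N))) (N + 2)
    (w.coeff 0 * vProd (fun l => (X l).coeff 0) (-1 - N) N * D ((X (-1)).coeff (N + 2))) := by
  have inner (l : ℤ) (hl : l ≤ -2) : X l ∈ regularSubring (constants D) (N + 3) :=
    ⟨hX.bigO l (by omega), (hdet l).mono (by grind [determinacyOrder])⟩
  have affine := hg.sub_mem (N + 3) (-1 - N) fun l _ hl => inner l (by omega)
  rw [sub_add_cancel, ← mul_assoc] at affine
  have slope_mem : w * vProd X (-1 - N) N ∈ regularSubring (constants D) (N + 3) :=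
    mul_mem (hg.weight_mem _) (vProd_mem fun l _ hl => inner l (by omega))
  have slope_lead : HasLead (w * vProd X (-1 - N) N) 0
      (w.coeff 0 * vProd (fun l => (X l).coeff 0) (-1 - N) N) :=
    (hg.weight_mem 0).1.hasLead.mul (hasLead_vProd fun l _ hl => (inner l (by omega)).1)
      (add_zero 0)
  have last : BigO (coeffwise D (X (-1))) (N + 2) :=
    (hdet (-1)).mono (by grind [determinacyOrder])
  have rest : BigO (coeffwise D (g (-1 - N) - w * vProd X (-1 - N) N * X (-1))) (N + 3) := affine.2
  have slope_var : BigO (coeffwise D (w * vProd X (-1 - N) N)) (N + 3) := slope_mem.2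
  have total := ((slope_lead.mul last.hasLead (zero_add _)).add
    ((hX.lead_neg_one.1.mul slope_var).hasLead_zero (m := N + 2) (by omega))).add
    (rest.hasLead_zero (m := N + 2) (by omega))
  rwa [← intDerivation_mul, map_sub, add_sub_cancel, add_zero, add_zero, coeff_coeffwise] at total

variable (hb : ∀ k ≤ -2, 1 - (X k).coeff 0 * (X k).coeff 0 ≠ 0)
include hb

lemma factorial_mul_variation {i : ℕ} (hi : i ≤ N) :
    BigO (coeffwise D (g (-2 - i))) (i + 3) ∧ BigO (coeffwise D (g (-1 - i))) (i + 2) ∧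
      ((i + 2).factorial : K) * D ((g (-1 - i)).coeff (i + 2)) = (N + 2).factorial *
        (w.coeff 0 * vProd (fun l => (X l).coeff 0) (-1 - i) i * D ((X (-1)).coeff (N + 2))) := by
  induction hi using Nat.decreasingInduction with
  | self =>
    have base := hg.hasLead_variation_row_base hX hdet
    exact ⟨hg.bigO_variation_row_low hX hdet, base.1, congrArg (_ * ·) base.2⟩
  | of_succ i _ ih =>
    obtain ⟨hprev, hself, formula⟩ := ih
    push_cast at hprev hself formula
    have site : (-2 - i : ℤ) = -1 - (i + 1) := by ring
    have next : (-2 - i + 1 : ℤ) = -1 - i := by ring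
    rw [show (-2 - (i + 1) : ℤ) = -2 - i - 1 by ring, add_assoc, show (1 + 3 : ℤ) = 4 by rfl]
      at hprev
    rw [← site, show (i + 1 + 2 : ℤ) = i + 3 by ring] at hself formula
    have hcross := hasLead_cross_zero (m := (i + 3 : ℤ) - 1) (hX.bigO (-2 - i) (by omega)) (hdet _)
      (hg.bigO_of_le_neg_one hX hb (by omega)) (hg.bigO_of_le_neg_one hX hb (by omega))
      (by grind [determinacyOrder])
    have hv := hX.lead_v (k := -2 - i) (by omega)
    have hv0 := hb (-2 - i) (by omega)
    have hnext := hg.transported.bigO_variation_next (o := i + 2) hv hv0 hself hcross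
      (hprev.mono (by omega)) (by omega)
    have balance := hg.transported.variation_balance (o := i + 2) hv hself hcross hnext
      (hprev.mono (by omega)) (by omega)
    rw [next] at hnext balance
    refine ⟨hself, hnext, mul_left_cancel₀ hv0 ?_⟩
    rw [vProd_succ', next, show i + 1 + 2 = (i + 2) + 1 by rfl, Nat.factorial_succ] at formula
    push_cast at balance formula
    linear_combination ((i + 2).factorial : K) * balance + formula

end IsRecursionFamily

/-- The variation caused by the initial value at index `N + 1` enters the rows with negative index
through `X_{-1}` and is transported back to row `0`. -/
lemma IsRecursionFamily.variation_coeff_zero [CharZero K] {r : ℕ}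
    (hg : IsRecursionFamily (constants D) (r + 1) w X g) (hX : IsSingularSolution X ε p q)
    (hb : ∀ k ≤ -2, 1 - (X k).coeff 0 * (X k).coeff 0 ≠ 0) (hq : q ≠ 0)
    (hDp : D p = 0) (hDq : D q = 0)
    (hDb : ∀ k : ℤ, k ≤ -2 ∨ 2 ≤ k → k < r + 2 → D ((X k).coeff 0) = 0) :
    D ((g 0).coeff 0) = -2 * w.coeff 0 * p * vProd (fun l => (X l).coeff 0) 2 r *
      D ((X (r + 2)).coeff 0) := by
  have hdet := hX.bigO_variation hDp hDq hDb
  obtain ⟨hprev, hself, formula⟩ := hg.factorial_mul_variation hX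
    (by push_cast; rwa [add_assoc]) hb (Nat.zero_le _)
  have across := hX.factorial_mul_variation_neg_one hdet rfl
  have hv := hX.lead_v_neg_one
  have hcross := hasLead_cross_zero (g := g) (k := -1) (m := 2 - 1) (b := -1) hX.lead_neg_one.1
    (hdet _) (hg.bigO_zero hX hb hq) ((hg.bigO_of_le_neg_one hX hb (by omega)).mono (by omega))
    (by grind [determinacyOrder])
  have hv0 : -8 * q ≠ 0 := mul_ne_zero (by norm_num) hq
  have hnext := hg.transported.bigO_variation_next (o := 0) hv hv0 hself hcross
    (hprev.mono (by omega)) rfl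
  have balance : -8 * q * D ((g 0).coeff 0) = _ :=
    hg.transported.variation_balance hv hself hcross hnext (hprev.mono (by omega)) rfl
  refine mul_left_cancel₀ hv0 (balance.trans ?_)
  rw [vProd_zero] at formula
  push_cast at formula ⊢
  rw [show (r + 1 + 2 : ℤ) = r + 3 by ring] at formula
  simp only [Nat.factorial_two, Nat.cast_ofNat] at formula ⊢
  linear_combination formula + w.coeff 0 * across

end RecursionVariation

/-! ### The recursion polynomials seen from the two sides of the pole -/

section Symmetry

variable {A : Type*} [CommRing A] {S : Subring A} {x g : ℤ → A}

/-- The sequence `x` re-indexed so that index `n` becomes the origin. -/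
def shift (n : ℤ) (x : ℤ → A) (k : ℤ) : A := x (n + k)

/-- The symmetry `x_k ↦ (-1)^k x_{-k}` of the self-dual Toeplitz lattice. -/
def reflect (x : ℤ → A) (k : ℤ) : A := ((k.negOnePow : ℤ) : A) * x (-k)

lemma IsTransported.shift {D : IntDerivation A} {τ : A} (h : IsTransported D τ x g) (n : ℤ) :
    IsTransported D τ (shift n x) (shift n g) := fun k => by
  simpa only [SingConf.shift, add_assoc, add_sub_assoc] using h (n + k)

lemma reflect_eq_or_neg (k : ℤ) :
    (∀ x : ℤ → A, reflect x k = x (-k)) ∨ ∀ x : ℤ → A, reflect x k = -x (-k) := by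
  rcases Int.units_eq_one_or k.negOnePow with h | h
  · exact .inl fun x => by rw [reflect, h, Units.val_one, Int.cast_one, one_mul]
  · exact .inr fun x => by rw [reflect, h, Units.val_neg, Units.val_one, Int.cast_neg,
      Int.cast_one, neg_one_mul]

lemma reflect_mul_self (x : ℤ → A) (k : ℤ) : reflect x k * reflect x k = x (-k) * x (-k) := by
  rcases reflect_eq_or_neg (A := A) k with h | h <;> rw [h]
  exact neg_mul_neg _ _

lemma reflect_mem_iff {k : ℤ} : reflect x k ∈ S ↔ x (-k) ∈ S := by
  rcases reflect_eq_or_neg (A := A) k with h | h <;> rw [h]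
  exact neg_mem_iff

lemma reflect_add_one (x : ℤ → A) (k : ℤ) :
    reflect x (k + 1) = -(((k.negOnePow : ℤ) : A) * x (-k - 1)) := by
  rw [reflect, Int.negOnePow_succ, Units.val_neg, Int.cast_neg, neg_mul, neg_add']

lemma reflect_sub_one (x : ℤ → A) (k : ℤ) :
    reflect x (k - 1) = -(((k.negOnePow : ℤ) : A) * x (-k + 1)) := by
  rw [reflect, ← neg_eq_iff_eq_neg.mpr (Int.negOnePow_succ (k - 1)), sub_add_cancel, Units.val_neg,
    Int.cast_neg, neg_mul, neg_sub', sub_neg_eq_add]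

lemma reflect_add_natCast (x : ℤ → A) (k : ℤ) (j : ℕ) :
    (-1) ^ j * reflect x (k + j) = ((k.negOnePow : ℤ) : A) * x (-k - j) := by
  have sign : ((-1) ^ j * (-1) ^ j : A) = 1 := by rw [← mul_pow, neg_one_mul, neg_neg, one_pow]
  rw [reflect, Int.negOnePow_add, Units.val_mul, Int.cast_mul, Int.coe_negOnePow_natCast,
    Int.cast_pow, Int.cast_neg, Int.cast_one, neg_add']
  linear_combination ((k.negOnePow : ℤ) : A) * x (-k - j) * sign

lemma IsTransported.reflect {D : IntDerivation A} {τ : A} (h : IsTransported D τ x g) :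
    IsTransported D τ (reflect x) (reflect g) := fun k => by
  rw [reflect_mul_self, reflect_add_one, reflect_sub_one, SingConf.reflect, intDerivation_mul,
    D.map_intCast, h]
  ring

lemma vProd_shift (n : ℤ) (x : ℤ → A) (k : ℤ) (j : ℕ) :
    vProd (shift n x) k j = vProd x (n + k) j := by
  simp only [vProd, shift, add_assoc]

lemma vProd_reflect (x : ℤ → A) (k : ℤ) (j : ℕ) :
    vProd (reflect x) k j = vProd x (1 - k - j) j := by
  rw [vProd, ← Finset.prod_range_reflect, vProd]
  refine Finset.prod_congr rfl fun i hi => ?_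
  have index : -(k + ((j - 1 - i : ℕ) : ℤ)) = 1 - k - j + i := by
    have := Finset.mem_range.mp hi
    omega
  rw [reflect_mul_self, index]

lemma vProd_const_mul {c : A} (hc : c * c = 1) (x : ℤ → A) (k : ℤ) (j : ℕ) :
    vProd (fun l => c * x l) k j = vProd x k j := by
  simp only [vProd, mul_mul_mul_comm c _ c, hc, one_mul]

end Symmetry

section TimeShift

variable {K : Type*} [Field K] {T : Subring K} {c : ℕ → K} {n : ℤ} {N : ℕ}
  {x : ℤ → LaurentSeries K}

/-- The parameters `c` with the first one moving in time: `c_1 + t, c_2, c_3, …`. -/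
def timeShift (c : ℕ → K) (i : ℕ) : LaurentSeries K :=
  HahnSeries.C (c i) + if i = 1 then tVar else 0

lemma coeff_timeShift_zero (c : ℕ → K) (i : ℕ) : (timeShift c i).coeff 0 = c i := by
  rw [timeShift, tVar]
  split_ifs <;> simp [HahnSeries.C_apply]

lemma euler_single (m : ℤ) (a : K) :
    euler (HahnSeries.single m a) = HahnSeries.single m ((m : K) * a) := by
  ext i
  rw [coeff_euler, HahnSeries.coeff_single, HahnSeries.coeff_single]
  split_ifs with h
  exacts [h ▸ rfl, mul_zero _]

lemma euler_timeShift (c : ℕ → K) (i : ℕ) : euler (timeShift c i) = if i = 1 then tVar else 0 := by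
  rw [timeShift, map_add, HahnSeries.C_apply, euler_single, Int.cast_zero, zero_mul, map_zero,
    zero_add]
  split_ifs
  · rw [tVar, euler_single, Int.cast_one, one_mul]
  · exact map_zero euler

lemma timeShift_mem_seriesSubring (hc : ∀ i, c i ∈ T) (i : ℕ) :
    timeShift c i ∈ seriesSubring T := by
  have single_mem (m : ℤ) {a : K} (ha : a ∈ T) : HahnSeries.single m a ∈ seriesSubring T :=
    fun j => by
      rw [HahnSeries.coeff_single]
      split_ifs
      exacts [ha, T.zero_mem]
  refine add_mem (single_mem 0 (hc i)) ?_
  split_ifs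
  exacts [single_mem 1 T.one_mem, zero_mem _]

lemma timeShift_mem_regularSubring (hc : ∀ i, c i ∈ T) (i : ℕ) (m : ℤ) :
    timeShift c i ∈ regularSubring T m := by
  refine ⟨(bigO_single 0 (c i)).add ?_, fun j _ => timeShift_mem_seriesSubring hc i j⟩
  split_ifs
  exacts [(bigO_single 1 1).mono zero_le_one, fun _ _ => rfl]

lemma isTransported_GamSD_timeShift (hx : IsTransported euler tVar x x) (hN : 1 ≤ N) :
    IsTransported euler tVar x (GamSD N (timeShift c) x) :=
  isTransported_GamSD hx hN (euler_timeShift c)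

lemma isRecursionFamily_shift (hx : IsTransported euler tVar x x) (hN : 1 ≤ N)
    (hc : ∀ i, c i ∈ T) (n : ℤ) :
    IsRecursionFamily T N (timeShift c N) (shift n x) (shift n (GamSD N (timeShift c) x)) where
  transported := (isTransported_GamSD_timeShift hx hN).shift n
  weight_mem := timeShift_mem_regularSubring hc N
  sub_mem m k h := by
    rw [vProd_shift]
    simp only [shift, ← add_assoc]
    refine GamSD_sub_up_mem hN (fun i => timeShift_mem_regularSubring hc i m) fun l hl hl' => ?_
    simpa only [shift, add_sub_cancel] using h (l - n) (by omega) (by omega)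

lemma isRecursionFamily_reflect (hx : IsTransported euler tVar x x) (hN : 1 ≤ N)
    (hc : ∀ i, c i ∈ T) (n : ℤ) :
    IsRecursionFamily T N ((-1) ^ N * timeShift c N) (reflect (shift n x))
      (reflect (shift n (GamSD N (timeShift c) x))) where
  transported := ((isTransported_GamSD_timeShift hx hN).shift n).reflect
  weight_mem m := mul_mem (pow_mem (neg_mem (one_mem _)) N) (timeShift_mem_regularSubring hc N m)
  sub_mem m k h := by
    have mirror : GamSD N (timeShift c) x (n - k) - timeShift c N *
        (vProd x (n - k - N + 1) N * x (n - k - N)) ∈ regularSubring T m := by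
      refine GamSD_sub_down_mem hN (fun i => timeShift_mem_regularSubring hc i m) fun l hl hl' => ?_
      simpa only [reflect_mem_iff, shift, neg_sub, add_sub_cancel]
        using h (n - l) (by omega) (by omega)
    have index : n + (1 - k - N) = n - k - N + 1 := by ring
    convert mul_mem (intCast_mem (regularSubring T m) (k.negOnePow : ℤ)) mirror using 1
    have center : reflect (shift n (GamSD N (timeShift c) x)) k =
        ((k.negOnePow : ℤ) : LaurentSeries K) * GamSD N (timeShift c) x (n - k) := rfl
    have top : (-1) ^ N * reflect (shift n x) (k + N) =
        ((k.negOnePow : ℤ) : LaurentSeries K) * x (n - k - N) := by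
      rw [reflect_add_natCast, shift, ← add_sub_assoc, ← sub_eq_add_neg]
    rw [vProd_reflect, vProd_shift, index, center]
    linear_combination -timeShift c N * vProd x (n - k - N + 1) N * top

end TimeShift

section Center

variable {K : Type*} [Field K] {x : ℤ → LaurentSeries K} {n : ℤ} {N : ℕ} {c : ℕ → K} {ε p q : K}

lemma coeff_reflect (X : ℤ → LaurentSeries K) (k m : ℤ) :
    (reflect X k).coeff m = reflect (fun l => (X l).coeff m) k := by
  rcases Int.units_eq_one_or k.negOnePow with h | h <;> simp [reflect, h]

lemma IsSingularSolution.reflect {X : ℤ → LaurentSeries K} (hX : IsSingularSolution X ε p q) :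
    IsSingularSolution (reflect X) ε (-q) (-p) where
  transported := hX.transported.reflect
  sign := hX.sign
  bigO k hk i hi := by
    rw [coeff_reflect, SingConf.reflect, hX.bigO _ (neg_ne_zero.mpr hk) i hi, mul_zero]
  lead_zero := by simpa [SingConf.reflect] using hX.lead_zero
  coeff_one_zero := by simp [SingConf.reflect, hX.coeff_neg_one_zero]
  coeff_one_one := by simp [SingConf.reflect, hX.coeff_neg_one_one]
  coeff_neg_one_zero := by simp [SingConf.reflect, hX.coeff_one_zero]
  coeff_neg_one_one := by simp [SingConf.reflect, hX.coeff_one_one]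

lemma one_sub_coeff_reflect_ne_zero {k : ℤ}
    (hb : ∀ k, k ≤ -2 ∨ 2 ≤ k → 1 - (x (n + k)).coeff 0 * (x (n + k)).coeff 0 ≠ 0) (hk : k ≤ -2) :
    1 - (reflect (shift n x) k).coeff 0 * (reflect (shift n x) k).coeff 0 ≠ 0 := by
  rw [coeff_reflect, reflect_mul_self]
  exact hb (-k) (.inr (by omega))

lemma IsTransported.of_shift {A : Type*} [CommRing A] {D : IntDerivation A} {τ : A} {x g : ℤ → A}
    (h : IsTransported D τ (SingConf.shift n x) (SingConf.shift n g)) : IsTransported D τ x g := by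
  have unshift (y : ℤ → A) : SingConf.shift (-n) (SingConf.shift n y) = y :=
    funext fun k => congrArg y (add_neg_cancel_left n k)
  exact unshift x ▸ unshift g ▸ h.shift (-n)

namespace IsSingularSolution

variable (hX : IsSingularSolution (shift n x) ε p q)
include hX

lemma GamSD_mem_seriesSubring [CharZero K] {T : Subring K} (hT : IntDivClosed T)
    (hc : ∀ i, c i ∈ T) (hp : p ∈ T) (hq : q ∈ T)
    (hb : ∀ k, k ≤ -2 ∨ 2 ≤ k → (x (n + k)).coeff 0 ∈ T) (k : ℤ) :
    GamSD N (timeShift c) x k ∈ seriesSubring T := by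
  refine GamSD_mem (timeShift_mem_seriesSubring hc) fun l _ _ => ?_
  simpa only [shift, add_sub_cancel] using hX.mem_seriesSubring hT hp hq hb (l - n)

variable [CharZero K] (hN : 1 ≤ N)
  (hb : ∀ k, k ≤ -2 ∨ 2 ≤ k → 1 - (x (n + k)).coeff 0 * (x (n + k)).coeff 0 ≠ 0)
include hN hb

lemma bigO_GamSD_center (hq : q ≠ 0) : BigO (GamSD N (timeShift c) x n) (-1) := by
  have family := isRecursionFamily_shift (T := ⊤) (c := c) hX.transported.of_shift hN
    (fun _ => Subring.mem_top _) n
  simpa only [shift, add_zero] using family.bigO_zero hX (fun k hk => hb k (.inl hk)) hq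

lemma residue_GamSD_center (hq : q ≠ 0) :
    (GamSD N (timeShift c) x n).coeff (-1) =
      ((GamSD N (timeShift c) x (n + 1)).coeff 0 -
        (GamSD N (timeShift c) x (n - 1)).coeff 0) / 4 := by
  have hx := hX.transported.of_shift
  have left := isRecursionFamily_shift (T := ⊤) (c := c) hx hN (fun _ => Subring.mem_top _) n
  have right := isRecursionFamily_reflect (T := ⊤) (c := c) hx hN (fun _ => Subring.mem_top _) n
  have hone := right.bigO_of_le_neg_one hX.reflect
    (fun _ => one_sub_coeff_reflect_ne_zero hb) le_rfl
  have key := hX.residue_eq left.transported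
    (left.bigO_zero hX (fun k hk => hb k (.inl hk)) hq) (by simpa [SingConf.reflect] using hone.neg)
    (left.bigO_of_le_neg_one hX (fun k hk => hb k (.inl hk)) le_rfl)
  simpa only [shift, add_zero, ← sub_eq_add_neg] using key

variable {D : IntDerivation K} (hDc : ∀ i, D (c i) = 0) (hDp : D p = 0) (hDq : D q = 0)
include hDc hDp hDq

lemma variation_GamSD_center_right (hq : q ≠ 0)
    (hDb : ∀ k : ℤ, k ≤ -2 ∨ 2 ≤ k → k ≤ N → D ((x (n + k)).coeff 0) = 0) :
    D ((GamSD N (timeShift c) x n).coeff 0) =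
      -2 * c N * p * vProd (fun l => (x l).coeff 0) (n + 2) (N - 1) *
        D ((x (n + N + 1)).coeff 0) := by
  obtain ⟨r, rfl⟩ := Nat.exists_eq_add_of_le' hN
  have family := isRecursionFamily_shift (T := constants D) hX.transported.of_shift hN hDc n
  have key := family.variation_coeff_zero hX (fun k hk => hb k (.inl hk)) hq hDp hDq
    fun k hk hkr => hDb k hk (by push_cast; omega)
  rw [coeff_timeShift_zero] at key
  have hprod : vProd (fun l => (x (n + l)).coeff 0) 2 r =
      vProd (fun l => (x l).coeff 0) (n + 2) r := vProd_shift n (fun l => (x l).coeff 0) 2 r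
  simp only [shift, add_zero] at key
  rw [key, hprod, Nat.add_sub_cancel]
  push_cast
  ring_nf

lemma variation_GamSD_center_left (hp : p ≠ 0)
    (hDb : ∀ k : ℤ, k ≤ -2 ∨ 2 ≤ k → -N ≤ k → D ((x (n + k)).coeff 0) = 0) :
    D ((GamSD N (timeShift c) x n).coeff 0) =
      -2 * c N * q * vProd (fun l => (x l).coeff 0) (n - N) (N - 1) *
        D ((x (n - N - 1)).coeff 0) := by
  obtain ⟨r, rfl⟩ := Nat.exists_eq_add_of_le' hN
  have family := isRecursionFamily_reflect (T := constants D) hX.transported.of_shift hN hDc n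
  have key := family.variation_coeff_zero hX.reflect (fun _ => one_sub_coeff_reflect_ne_zero hb)
    (neg_ne_zero.mpr hp) (by rw [map_neg, hDq, neg_zero]) (by rw [map_neg, hDp, neg_zero])
    fun k hk hkr => by
      rw [coeff_reflect]
      exact (reflect_mem_iff (S := constants D)).mpr (hDb (-k) (by omega) (by push_cast; omega))
  have weight : ((-1) ^ (r + 1) * timeShift c (r + 1)).coeff 0 = (-1) ^ (r + 1) * c (r + 1) := by
    rcases Nat.even_or_odd (r + 1) with h | h <;> simp [h.neg_one_pow, coeff_timeShift_zero]
  have far : D ((SingConf.reflect (shift n x) (r + 2)).coeff 0) =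
      (-1) ^ r * D ((x (n - (r + 1 : ℕ) - 1)).coeff 0) := by
    have index : n + -(r + 2 : ℤ) = n - (r + 1 : ℕ) - 1 := by push_cast; ring
    rw [coeff_reflect, SingConf.reflect, shift, index, intDerivation_mul, D.map_intCast, mul_zero,
      add_zero, Int.negOnePow_add, Int.negOnePow_even 2 even_two, mul_one,
      Int.cast_negOnePow_natCast]
  have hprod : vProd (fun l => (SingConf.reflect (shift n x) l).coeff 0) 2 r =
      vProd (fun l => (x l).coeff 0) (n - (r + 1 : ℕ)) r := by
    have index : n + (1 - 2 - r) = n - (r + 1 : ℕ) := by push_cast; ring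
    simp only [coeff_reflect]
    rw [vProd_reflect, ← index]
    exact vProd_shift n (fun l => (x l).coeff 0) (1 - 2 - r) r
  have center : (GamSD (r + 1) (timeShift c) x n).coeff 0 =
      (SingConf.reflect (shift n (GamSD (r + 1) (timeShift c) x)) 0).coeff 0 := by
    simp [SingConf.reflect, shift]
  have sign : ((-1) ^ r * (-1) ^ r : K) = 1 := by rw [← mul_pow, neg_one_mul, neg_neg, one_pow]
  rw [center, key, weight, hprod, far, Nat.add_sub_cancel]
  linear_combination (-2 * c (r + 1) * q * vProd (fun l => (x l).coeff 0) (n - (r + 1 : ℕ)) r *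
    D ((x (n - (r + 1 : ℕ) - 1)).coeff 0)) * sign

end IsSingularSolution

end Center

/-! ### Dependence on the parameters -/

section PartialDerivatives

open TensorProduct KaehlerDifferential

/-- The unique extension of a derivation along a formally étale algebra. -/
def extendDerivation {R F : Type*} [CommRing R] [CommRing F] [Algebra R F]
    [Algebra.FormallyEtale R F] (D : IntDerivation R) : IntDerivation F :=
  (((Derivation.liftKaehlerDifferential ((Algebra.linearMap R F).compDer D)).liftBaseChange F) ∘ₗ
    (tensorKaehlerEquivOfFormallyEtale ℤ R F).symm.toLinearMap).compDer
    (KaehlerDifferential.D ℤ F)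

lemma extendDerivation_algebraMap {R F : Type*} [CommRing R] [CommRing F] [Algebra R F]
    [Algebra.FormallyEtale R F] (D : IntDerivation R) (a : R) :
    extendDerivation D (algebraMap R F a) = algebraMap R F (D a) := by
  have symm_D : (tensorKaehlerEquivOfFormallyEtale ℤ R F).symm
      (KaehlerDifferential.D ℤ F (algebraMap R F a)) = 1 ⊗ₜ KaehlerDifferential.D ℤ R a := by
    rw [LinearEquiv.symm_apply_eq]
    simp
  simp [extendDerivation, symm_D]

variable {σ : Type*}

instance : Algebra.FormallyEtale (MvPolynomial σ ℚ) (FractionRing (MvPolynomial σ ℚ)) :=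
  Algebra.FormallyEtale.of_isLocalization (nonZeroDivisors _)

/-- The partial derivative `∂/∂X_i` on the field of rational functions over `ℚ`. -/
def ratPartial (i : σ) : IntDerivation (FractionRing (MvPolynomial σ ℚ)) :=
  extendDerivation (intDerivationOfLeibniz
    (pderiv (R := ℚ) i : MvPolynomial σ ℚ →ₗ[ℚ] MvPolynomial σ ℚ).toAddMonoidHom
    fun a b => (pderiv i).leibniz a b)

lemma ratPartial_algebraMap (i : σ) (P : MvPolynomial σ ℚ) :
    ratPartial i (algebraMap _ _ P) = algebraMap _ (FractionRing (MvPolynomial σ ℚ)) (pderiv i P) :=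
  extendDerivation_algebraMap _ P

lemma ratPartial_X_of_ne {i j : σ} (h : j ≠ i) :
    ratPartial i (algebraMap (MvPolynomial σ ℚ) (FractionRing (MvPolynomial σ ℚ)) (X j)) = 0 := by
  rw [ratPartial_algebraMap, pderiv_X_of_ne h, map_zero]

lemma mem_supported_of_pderiv_eq_zero {R : Type*} [CommRing R] [NoZeroDivisors R] [CharZero R]
    {s : Set σ} {P : MvPolynomial σ R} (h : ∀ i ∉ s, pderiv i P = 0) : P ∈ supported R s := by
  refine mem_supported.mpr fun i hi => by_contra fun his => ?_
  obtain ⟨d, hd, hdi⟩ := (mem_vars_iff_mem_support i).mp hi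
  have vanish := coeff_pderiv (i := i) P (d - Finsupp.single i 1)
  rw [h i his, coeff_zero, Finsupp.sub_add_single_one_cancel (Finsupp.mem_support_iff.mp hdi)]
    at vanish
  exact mul_ne_zero (mem_support_iff.mp hd) (Nat.cast_add_one_ne_zero _) vanish.symm

/-- The polynomials, as a subring of the field of rational functions. -/
def polynomialSubring (σ : Type*) : Subring (FractionRing (MvPolynomial σ ℚ)) :=
  (algebraMap (MvPolynomial σ ℚ) (FractionRing (MvPolynomial σ ℚ))).range

lemma intDivClosed_polynomialSubring : IntDivClosed (polynomialSubring σ) := by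
  rintro z a hz ⟨P, hP⟩
  refine ⟨C (z : ℚ)⁻¹ * P, ?_⟩
  have cancel : (C (z : ℚ)⁻¹ : MvPolynomial σ ℚ) * (z : MvPolynomial σ ℚ) = 1 := by
    rw [← map_intCast (C : ℚ →+* MvPolynomial σ ℚ), ← map_mul,
      inv_mul_cancel₀ (Int.cast_ne_zero.mpr hz), map_one]
  rw [map_mul, hP, ← map_intCast (algebraMap (MvPolynomial σ ℚ) (FractionRing _)), ← mul_assoc,
    ← map_mul, cancel, map_one, one_mul]

end PartialDerivatives

section BoundarySlope

variable {K : Type*} [Field K]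

/-- The coefficient with which a boundary parameter enters the constant term of `Γ_n`. -/
def boundarySlope (ε c p : K) (a : ℤ → K) (k : ℤ) (j : ℕ) : K := -2 * ε * c * p * vProd a k j

lemma boundarySlope_mem {S : Subring K} {ε c p : K} {a : ℤ → K} {k : ℤ} {j : ℕ} (hε : ε ∈ S)
    (hc : c ∈ S) (hp : p ∈ S) (ha : ∀ l, k ≤ l → l < k + j → a l ∈ S) :
    boundarySlope ε c p a k j ∈ S :=
  mul_mem (mul_mem (mul_mem (mul_mem (neg_mem (ofNat_mem S 2)) hε) hc) hp) (vProd_mem ha)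

lemma boundarySlope_ne_zero [CharZero K] {ε c p : K} {a : ℤ → K} {k : ℤ} {j : ℕ} (hε : ε ≠ 0)
    (hc : c ≠ 0) (hp : p ≠ 0) (ha : ∀ l, k ≤ l → l < k + j → 1 - a l * a l ≠ 0) :
    boundarySlope ε c p a k j ≠ 0 := by
  have slope : vProd a k j ≠ 0 := Finset.prod_ne_zero_iff.mpr fun i hi =>
    ha _ (by omega) (by have := Finset.mem_range.mp hi; omega)
  exact mul_ne_zero (mul_ne_zero (mul_ne_zero (mul_ne_zero (by norm_num) hε) hc) hp) slope

end BoundarySlope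

section Parameters

variable {n k : ℤ} {N : ℕ}

lemma avSD_of_off (h : k ≤ n - 2 ∨ n + 2 ≤ k) :
    avSD n N k =
      algebraMap (MvPolynomial (IdxSD n N) ℚ) (KSD n N) (MvPolynomial.X (Sum.inl ⟨k, h⟩)) := by
  rw [avSD, if_neg (by omega), if_neg (by omega), dif_pos h]

lemma algebraMap_X_ne_zero (i : IdxSD n N) :
    algebraMap (MvPolynomial (IdxSD n N) ℚ) (KSD n N) (MvPolynomial.X i) ≠ 0 :=
  (map_ne_zero_iff _ (IsFractionRing.injective _ _)).mpr (MvPolynomial.X_ne_zero i)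

lemma uvSD_ne_zero (hN : 1 ≤ N) : uvSD n N N ≠ 0 := by
  rw [uvSD, dif_pos ⟨hN, le_rfl⟩]
  exact algebraMap_X_ne_zero _

lemma one_sub_avSD_mul_self_ne_zero (h : k ≤ n - 2 ∨ n + 2 ≤ k) :
    1 - avSD n N k * avSD n N k ≠ 0 := by
  rw [avSD_of_off h, ← map_mul,
    ← map_one (algebraMap (MvPolynomial (IdxSD n N) ℚ) (KSD n N)), ← map_sub]
  refine (map_ne_zero_iff _ (IsFractionRing.injective _ _)).mpr fun h0 => ?_
  simpa using congrArg MvPolynomial.constantCoeff h0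

lemma uvSD_mem_polynomialSubring (i : ℕ) : uvSD n N i ∈ polynomialSubring (IdxSD n N) := by
  rw [uvSD]
  split_ifs
  exacts [⟨_, rfl⟩, zero_mem _]

lemma avSD_mem_polynomialSubring (k : ℤ) : avSD n N k ∈ polynomialSubring (IdxSD n N) := by
  rw [avSD]
  split_ifs
  exacts [neg_mem (one_mem _), one_mem _, ⟨_, rfl⟩, zero_mem _]

/-- The derivative of a rational function with respect to the parameter `a_k`. -/
def partialOff (n : ℤ) (N : ℕ) (k : OffSD n) : IntDerivation (KSD n N) := ratPartial (Sum.inl k)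

lemma partialOff_uvSD (k : OffSD n) (i : ℕ) : partialOff n N k (uvSD n N i) = 0 := by
  rw [uvSD]
  split_ifs
  exacts [ratPartial_X_of_ne Sum.inr_ne_inl, map_zero _]

lemma partialOff_apSD (k : OffSD n) : partialOff n N k (apSD n N) = 0 :=
  ratPartial_X_of_ne Sum.inr_ne_inl

lemma partialOff_amSD (k : OffSD n) : partialOff n N k (amSD n N) = 0 :=
  ratPartial_X_of_ne Sum.inr_ne_inl

lemma partialOff_avSD_of_ne {k : OffSD n} {l : ℤ} (h : l ≠ k) :
    partialOff n N k (avSD n N l) = 0 := by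
  rw [avSD]
  split_ifs
  · exact neg_mem (one_mem (constants (partialOff n N k)))
  · exact one_mem (constants (partialOff n N k))
  · exact ratPartial_X_of_ne fun e => h (congrArg Subtype.val (Sum.inl.inj e))
  · exact map_zero _

/-- The polynomials in `a_{n-N}, …, a_{n+N}, a_+, a_-` over `ℚ(u_1, …, u_N)`. -/
def innerSubring (n : ℤ) (N : ℕ) : Subring (KSD n N) :=
  Subring.closure
    ((Subfield.closure {c : KSD n N | ∃ i : ℕ, 1 ≤ i ∧ i ≤ N ∧ c = uvSD n N i} :
        Subfield (KSD n N)) ∪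
      {c : KSD n N | ∃ i : ℤ, n - N ≤ i ∧ i ≤ n + N ∧ c = avSD n N i} ∪
      {apSD n N, amSD n N})

lemma uvSD_mem_innerSubring {i : ℕ} (h : 1 ≤ i ∧ i ≤ N) : uvSD n N i ∈ innerSubring n N :=
  Subring.subset_closure (.inl (.inl (Subfield.subset_closure ⟨i, h.1, h.2, rfl⟩)))

lemma avSD_mem_innerSubring (h : n - N ≤ k) (h' : k ≤ n + N) : avSD n N k ∈ innerSubring n N :=
  Subring.subset_closure (.inl (.inr ⟨k, h, h', rfl⟩))

lemma apSD_mem_innerSubring : apSD n N ∈ innerSubring n N :=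
  Subring.subset_closure (.inr (.inl rfl))

lemma amSD_mem_innerSubring : amSD n N ∈ innerSubring n N :=
  Subring.subset_closure (.inr (.inr rfl))

lemma algebraMap_rat_mem_innerSubring (r : ℚ) :
    algebraMap (MvPolynomial (IdxSD n N) ℚ) (KSD n N) (MvPolynomial.C r) ∈ innerSubring n N := by
  refine Subring.subset_closure (.inl (.inl ?_))
  have cast : algebraMap (MvPolynomial (IdxSD n N) ℚ) (KSD n N) (MvPolynomial.C r) = r :=
    map_ratCast ((algebraMap (MvPolynomial (IdxSD n N) ℚ) (KSD n N)).comp MvPolynomial.C) r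
  rw [cast]
  exact SubfieldClass.ratCast_mem _ r

lemma algebraMap_X_mem_innerSubring {i : IdxSD n N}
    (hi : ∀ k : OffSD n, i = Sum.inl k → n - N ≤ k ∧ k ≤ n + N) :
    algebraMap (MvPolynomial (IdxSD n N) ℚ) (KSD n N) (MvPolynomial.X i) ∈ innerSubring n N := by
  rcases i with ⟨k, hk⟩ | (_ | _) | ⟨i, h⟩
  · rw [← avSD_of_off hk]
    exact avSD_mem_innerSubring (hi _ rfl).1 (hi _ rfl).2
  · exact amSD_mem_innerSubring
  · exact apSD_mem_innerSubring
  · simpa only [uvSD, dif_pos h] using uvSD_mem_innerSubring (n := n) h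

lemma mem_innerSubring_of_partialOff_eq_zero {f : KSD n N}
    (hf : f ∈ polynomialSubring (IdxSD n N))
    (h : ∀ k : OffSD n, (k : ℤ) < n - N ∨ n + N < k → partialOff n N k f = 0) :
    f ∈ innerSubring n N := by
  obtain ⟨P, rfl⟩ := hf
  let inner : Set (IdxSD n N) := {i | ∀ k : OffSD n, i = Sum.inl k → n - N ≤ k ∧ k ≤ n + N}
  have supported : P ∈ MvPolynomial.supported ℚ inner := by
    refine mem_supported_of_pderiv_eq_zero fun i hi => ?_
    obtain ⟨k, rfl, hk⟩ : ∃ k : OffSD n, i = Sum.inl k ∧ ¬(n - N ≤ k ∧ k ≤ n + N) := by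
      simpa only [inner, Set.mem_ofPred_eq, not_forall, exists_prop] using hi
    exact IsFractionRing.injective _ (KSD n N)
      ((ratPartial_algebraMap _ P).symm.trans ((h k (by omega)).trans (map_zero _).symm))
  clear h
  rw [MvPolynomial.supported_eq_adjoin_X] at supported
  induction supported using Algebra.adjoin_induction with
  | mem _ hX =>
    obtain ⟨i, hi, rfl⟩ := hX
    exact algebraMap_X_mem_innerSubring hi
  | algebraMap r => exact algebraMap_rat_mem_innerSubring r
  | add _ _ _ _ hP hQ => rw [map_add]; exact add_mem hP hQ
  | mul _ _ _ _ hP hQ => rw [map_mul]; exact mul_mem hP hQ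

end Parameters

section Solution

variable {n : ℤ} {N : ℕ} {ε : KSD n N} {x : ℤ → LaurentSeries (KSD n N)}

/-- The coefficient of `a_{n-N-1}` in the constant term of `Γ_n`. -/
def leftSlope (n : ℤ) (N : ℕ) (ε : KSD n N) : KSD n N :=
  boundarySlope ε (uvSD n N N) (amSD n N) (avSD n N) (n - N) (N - 1)

/-- The coefficient of `a_{n+N+1}` in the constant term of `Γ_n`. -/
def rightSlope (n : ℤ) (N : ℕ) (ε : KSD n N) : KSD n N :=
  boundarySlope ε (uvSD n N N) (apSD n N) (avSD n N) (n + 2) (N - 1)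

lemma leftSlope_ne_zero (hN : 1 ≤ N) (hε : ε ≠ 0) : leftSlope n N ε ≠ 0 :=
  boundarySlope_ne_zero hε (uvSD_ne_zero hN) (algebraMap_X_ne_zero _) fun _ _ _ =>
    one_sub_avSD_mul_self_ne_zero (by omega)

lemma rightSlope_ne_zero (hN : 1 ≤ N) (hε : ε ≠ 0) : rightSlope n N ε ≠ 0 :=
  boundarySlope_ne_zero hε (uvSD_ne_zero hN) (algebraMap_X_ne_zero _) fun _ _ _ =>
    one_sub_avSD_mul_self_ne_zero (by omega)

lemma leftSlope_mem {S : Subring (KSD n N)} (hN : 1 ≤ N) (hε : ε ∈ S) (hu : uvSD n N N ∈ S)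
    (hm : amSD n N ∈ S) (ha : ∀ k, n - N ≤ k → k ≤ n + N → avSD n N k ∈ S) :
    leftSlope n N ε ∈ S :=
  boundarySlope_mem hε hu hm fun l hl hl' => ha l hl (by omega)

lemma rightSlope_mem {S : Subring (KSD n N)} (hN : 1 ≤ N) (hε : ε ∈ S) (hu : uvSD n N N ∈ S)
    (hp : apSD n N ∈ S) (ha : ∀ k, n - N ≤ k → k ≤ n + N → avSD n N k ∈ S) :
    rightSlope n N ε ∈ S :=
  boundarySlope_mem hε hu hp fun l hl hl' => ha l (by omega) (by omega)

namespace IsTheSDSol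

variable (hx : IsTheSDSol n N ε x)
include hx

lemma coeff_zero {k : ℤ} (hk : k ≤ n - 2 ∨ n + 2 ≤ k) : (x k).coeff 0 = ε * avSD n N k := by
  obtain ⟨-, -, -, -, -, -, -, -, hoff⟩ := hx
  exact hoff k (le_abs'.mpr (by omega))

variable (hε : ε * ε = 1)
include hε

lemma isSingularSolution : IsSingularSolution (shift n x) ε (apSD n N) (amSD n N) := by
  obtain ⟨hsol, hreg, hpole, hlead, hone, hneg, hone', hneg', -⟩ := hx
  exact
    { transported := hsol.isTransported.shift n
      sign := hε
      bigO := fun k hk => hreg _ (by omega)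
      lead_zero := by rw [shift, add_zero]; exact ⟨hpole, hlead⟩
      coeff_one_zero := hone
      coeff_one_one := hone'
      coeff_neg_one_zero := hneg
      coeff_neg_one_one := hneg' }

lemma one_sub_coeff_zero_mul_self_ne_zero {k : ℤ} (hk : k ≤ -2 ∨ 2 ≤ k) :
    1 - (x (n + k)).coeff 0 * (x (n + k)).coeff 0 ≠ 0 := by
  rw [hx.coeff_zero (by omega), mul_mul_mul_comm, hε, one_mul]
  exact one_sub_avSD_mul_self_ne_zero (by omega)

lemma vProd_coeff_zero {k : ℤ} {j : ℕ} (h : k + j ≤ n - 1 ∨ n + 2 ≤ k) :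
    vProd (fun l => (x l).coeff 0) k j = vProd (avSD n N) k j := by
  rw [← vProd_const_mul hε (avSD n N)]
  refine Finset.prod_congr rfl fun i hi => ?_
  have hij := Finset.mem_range.mp hi
  dsimp only
  rw [hx.coeff_zero (by omega)]

lemma partialOff_coeff_zero {k : OffSD n} {l : ℤ} (hl : l ≤ n - 2 ∨ n + 2 ≤ l) :
    partialOff n N k ((x l).coeff 0) = ε * partialOff n N k (avSD n N l) := by
  have sign : partialOff n N k ε = 0 :=
    (hx.isSingularSolution hε).sign_mem (constants (partialOff n N k))
  rw [hx.coeff_zero hl, intDerivation_mul, sign, mul_zero, add_zero]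

lemma partialOff_coeff_zero_eq_zero {k : OffSD n} {l : ℤ} (hl : l ≤ n - 2 ∨ n + 2 ≤ l)
    (h : l ≠ k) : partialOff n N k ((x l).coeff 0) = 0 := by
  rw [hx.partialOff_coeff_zero hε hl, partialOff_avSD_of_ne h, mul_zero]

lemma GamSD_coeff_zero_mem_polynomialSubring (k : ℤ) :
    (GamSD N (timeShift (uvSD n N)) x k).coeff 0 ∈ polynomialSubring (IdxSD n N) := by
  have hX := hx.isSingularSolution hε
  refine hX.GamSD_mem_seriesSubring intDivClosed_polynomialSubring uvSD_mem_polynomialSubring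
    ⟨_, rfl⟩ ⟨_, rfl⟩ (fun k hk => ?_) k 0
  rw [hx.coeff_zero (by omega)]
  exact mul_mem (hX.sign_mem _) (avSD_mem_polynomialSubring _)

variable (hN : 1 ≤ N)
include hN

lemma partialOff_GamSD_right {k : OffSD n} (hk : n + N < k) :
    partialOff n N k ((GamSD N (timeShift (uvSD n N)) x n).coeff 0) =
      rightSlope n N ε * partialOff n N k (avSD n N (n + N + 1)) := by
  rw [(hx.isSingularSolution hε).variation_GamSD_center_right hN
    (fun _ => hx.one_sub_coeff_zero_mul_self_ne_zero hε) (partialOff_uvSD k) (partialOff_apSD k)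
    (partialOff_amSD k) (algebraMap_X_ne_zero _)
    fun l hl hlN => hx.partialOff_coeff_zero_eq_zero hε (by omega) (by omega),
    hx.vProd_coeff_zero hε (.inr le_rfl), hx.partialOff_coeff_zero hε (by omega), rightSlope,
    boundarySlope]
  ring

lemma partialOff_GamSD_left {k : OffSD n} (hk : (k : ℤ) < n - N) :
    partialOff n N k ((GamSD N (timeShift (uvSD n N)) x n).coeff 0) =
      leftSlope n N ε * partialOff n N k (avSD n N (n - N - 1)) := by
  rw [(hx.isSingularSolution hε).variation_GamSD_center_left hN
    (fun _ => hx.one_sub_coeff_zero_mul_self_ne_zero hε) (partialOff_uvSD k) (partialOff_apSD k)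
    (partialOff_amSD k) (algebraMap_X_ne_zero _)
    fun l hl hlN => hx.partialOff_coeff_zero_eq_zero hε (by omega) (by omega),
    hx.vProd_coeff_zero hε (.inl (by omega)), hx.partialOff_coeff_zero hε (by omega), leftSlope,
    boundarySlope]
  ring

lemma GamSD_coeff_zero_sub_mem_innerSubring :
    (GamSD N (timeShift (uvSD n N)) x n).coeff 0 - leftSlope n N ε * avSD n N (n - N - 1) -
      rightSlope n N ε * avSD n N (n + N + 1) ∈ innerSubring n N := by
  have hsign (S : Subring (KSD n N)) : ε ∈ S := (hx.isSingularSolution hε).sign_mem S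
  refine mem_innerSubring_of_partialOff_eq_zero (sub_mem (sub_mem
    (hx.GamSD_coeff_zero_mem_polynomialSubring hε n) (mul_mem ?_ (avSD_mem_polynomialSubring _)))
    (mul_mem ?_ (avSD_mem_polynomialSubring _))) fun k hk => ?_
  · exact leftSlope_mem hN (hsign _) (uvSD_mem_polynomialSubring N) ⟨_, rfl⟩
      fun k _ _ => avSD_mem_polynomialSubring k
  · exact rightSlope_mem hN (hsign _) (uvSD_mem_polynomialSubring N) ⟨_, rfl⟩
      fun k _ _ => avSD_mem_polynomialSubring k
  · have left : partialOff n N k (leftSlope n N ε) = 0 :=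
      leftSlope_mem (S := constants (partialOff n N k)) hN (hsign _) (partialOff_uvSD k N)
        (partialOff_amSD k) fun l hl hl' => partialOff_avSD_of_ne (by omega)
    have right : partialOff n N k (rightSlope n N ε) = 0 :=
      rightSlope_mem (S := constants (partialOff n N k)) hN (hsign _) (partialOff_uvSD k N)
        (partialOff_apSD k) fun l hl hl' => partialOff_avSD_of_ne (by omega)
    rw [map_sub, map_sub, intDerivation_mul, intDerivation_mul, left, right, mul_zero, mul_zero,
      add_zero, add_zero]
    rcases hk with hk | hk
    · rw [hx.partialOff_GamSD_left hε hN hk, partialOff_avSD_of_ne (l := n + N + 1) (by omega),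
        mul_zero, sub_self, sub_zero]
    · rw [hx.partialOff_GamSD_right hε hN hk, partialOff_avSD_of_ne (l := n - N - 1) (by omega),
        mul_zero, sub_zero, sub_self]

end IsTheSDSol

end Solution

end SingConf

/-- `Γ_n(t) = (Γ_{n+1}^{(0)} - Γ_{n-1}^{(0)})/(4t) + F + O(t)`, where
`F = Γ_n^{(0)}` is a polynomial in `a_{n-N-1}, …, a_{n+N+1}, a₊, a₋` over `ℚ(u_1, …, u_N)`,
of degree exactly one in `a_{n-N-1}` and in `a_{n+N+1}`, with nonzero coefficients: writing
`α = a_{n-N-1}`, `β = a_{n+N+1}`, we have `F = A + Bα + Cβ + Dαβ` with `A, B, C, D`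
polynomials in the remaining parameters `a_{n-N}, …, a_{n+N}, a₊, a₋` over `ℚ(u)`, and
`B, D` not both zero and `C, D` not both zero. -/
theorem statement10 (n : ℤ) (N : ℕ) (hN : 1 ≤ N)
    (ε : KSD n N) (hε : ε = 1 ∨ ε = -1)
    (x : ℤ → LaurentSeries (KSD n N)) (hx : IsTheSDSol n N ε x)
    (G : ℤ → LaurentSeries (KSD n N)) (hG : ∀ k, G k = GamSD N (utSD n N) x k) :
    BigO (G n) (-1) ∧
    (G n).coeff (-1) = ((G (n + 1)).coeff 0 - (G (n - 1)).coeff 0) / 4 ∧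
    ∃ A B C D : KSD n N,
      (∀ c ∈ ({A, B, C, D} : Set (KSD n N)),
        c ∈ Subring.closure
          ((Subfield.closure {c : KSD n N | ∃ i : ℕ, 1 ≤ i ∧ i ≤ N ∧ c = uvSD n N i} :
              Subfield (KSD n N)) ∪
            {c : KSD n N | ∃ i : ℤ, n - N ≤ i ∧ i ≤ n + N ∧ c = avSD n N i} ∪
            {apSD n N, amSD n N})) ∧
      (G n).coeff 0 = A + B * avSD n N (n - N - 1) + C * avSD n N (n + N + 1) +
        D * (avSD n N (n - N - 1) * avSD n N (n + N + 1)) ∧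
      (B ≠ 0 ∨ D ≠ 0) ∧ (C ≠ 0 ∨ D ≠ 0) := by
  obtain rfl : G = GamSD N (timeShift (uvSD n N)) x := funext hG
  have sign : ε * ε = 1 := mul_self_eq_one_iff.mpr hε
  have hX := hx.isSingularSolution sign
  have hv (k : ℤ) := hx.one_sub_coeff_zero_mul_self_ne_zero sign (k := k)
  have hq : amSD n N ≠ 0 := algebraMap_X_ne_zero _
  have hε0 : ε ≠ 0 := left_ne_zero_of_mul_eq_one sign
  have hA := hx.GamSD_coeff_zero_sub_mem_innerSubring sign hN
  have hu : uvSD n N N ∈ innerSubring n N := uvSD_mem_innerSubring ⟨hN, le_rfl⟩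
  have ha (k : ℤ) := avSD_mem_innerSubring (n := n) (k := k) (N := N)
  have hB := leftSlope_mem hN (hX.sign_mem _) hu amSD_mem_innerSubring ha
  have hC := rightSlope_mem hN (hX.sign_mem _) hu apSD_mem_innerSubring ha
  refine ⟨hX.bigO_GamSD_center hN hv hq, hX.residue_GamSD_center hN hv hq,
    (GamSD N (timeShift (uvSD n N)) x n).coeff 0 - leftSlope n N ε * avSD n N (n - N - 1) -
      rightSlope n N ε * avSD n N (n + N + 1), leftSlope n N ε, rightSlope n N ε, 0, ?_, by ring,
    .inl (leftSlope_ne_zero hN hε0), .inl (rightSlope_ne_zero hN hε0)⟩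
  rintro c (rfl | rfl | rfl | rfl)
  exacts [hA, hB, hC, zero_mem _]
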